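/- arXiv:1410.7081 — 2 statements merged into one kernel-verified Lean document; each statement's English description precedes it below -/
import Mathlib

section
/- ∫₀¹ k(2k²-1) K(k)⁴ dk = (93/16)ζ(5). -/
open scoped Real
open MeasureTheory

noncomputable def EllK (k : ℝ) : ℝ :=
  ∫ x in (0:ℝ)..(1:ℝ), 1 / Real.sqrt ((1 - x^2) * (1 - k^2 * x^2))

open Filter Topology PeriodPair

namespace PeriodPair

variable (L : PeriodPair)

lemma hasDerivAt_weierstrassP {z : ℂ} (hz : z ∉ L.lattice) :
    HasDerivAt ℘[L] (℘'[L] z) z := by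
  rw [← L.deriv_weierstrassP]
  exact (L.analyticOnNhd_weierstrassP z hz).differentiableAt.hasDerivAt

lemma derivWeierstrassP_eq_zero_of_two_mul_mem {h : ℂ} (h2 : 2 * h ∈ L.lattice) :
    ℘'[L] h = 0 := by
  have h1 := L.derivWeierstrassP_add_coe (-h) ⟨2 * h, h2⟩
  rw [show -h + ((⟨2 * h, h2⟩ : L.lattice) : ℂ) = h by simp; ring, L.derivWeierstrassP_neg] at h1
  exact CharZero.eq_neg_self_iff.mp h1

lemma tendsto_norm_weierstrassP_zero : Tendsto (fun z ↦ ‖℘[L] z‖) (𝓝[≠] 0) atTop := by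
  have h := L.order_weierstrassP 0 (zero_mem _)
  have := tendsto_cobounded_of_meromorphicOrderAt_neg (f := ℘[L]) (x := 0) (by
    rw [h]; exact WithTop.coe_lt_coe.mpr (show (-2 : ℤ) < 0 by norm_num))
  exact tendsto_norm_cobounded_atTop.comp this

lemma not_eventuallyEq_const_weierstrassP {h : ℂ} (hh : h ∉ L.lattice) (c : ℂ) :
    ¬ ∀ᶠ z in 𝓝 h, ℘[L] z = c := by
  intro hev
  have hc : (L.lattice : Set ℂ).Countable := by
    have : Countable L.lattice := L.latticeEquivProd.toEquiv.countable_iff.mpr inferInstance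
    exact Set.countable_coe_iff.mp this
  have hconn : IsPreconnected (L.lattice : Set ℂ)ᶜ :=
    (hc.isPathConnected_compl_of_one_lt_rank (by simp)).isConnected.isPreconnected
  have heq := L.analyticOnNhd_weierstrassP.eqOn_of_preconnected_of_eventuallyEq
    (analyticOnNhd_const (v := c)) hconn hh hev
  have h1 := L.tendsto_norm_weierstrassP_zero
  have h2 : ∀ᶠ z in 𝓝[≠] (0 : ℂ), z ∉ L.lattice := by
    filter_upwards [self_mem_nhdsWithin, mem_nhdsWithin_of_mem_nhds
      (L.compl_lattice_sdiff_singleton_mem_nhds 0)] with w hw hw'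
    simp_all
  obtain ⟨z, hz, hz2⟩ := ((h1.eventually_gt_atTop ‖c‖).and h2).exists
  rw [heq hz2] at hz
  exact lt_irrefl _ hz

end PeriodPair

namespace PeriodPair

variable (L : PeriodPair)

lemma mem_lattice_add_two_mul_iff {h z : ℂ} (h2 : 2 * h ∈ L.lattice) :
    z + h + h ∈ L.lattice ↔ z ∈ L.lattice := by
  rw [add_assoc, ← two_mul]
  exact L.lattice.add_mem_iff_left h2

lemma weierstrassP_add_of_mem {z l : ℂ} (hl : l ∈ L.lattice) : ℘[L] (z + l) = ℘[L] z :=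
  L.weierstrassP_add_coe z ⟨l, hl⟩

lemma weierstrassP_add_half_add_half {h : ℂ} (h2 : 2 * h ∈ L.lattice) (z : ℂ) :
    ℘[L] (z + h + h) = ℘[L] z := by
  rw [add_assoc, ← two_mul, L.weierstrassP_add_of_mem h2]

lemma exists_sub_eq_sq_mul {h : ℂ} (hh : h ∉ L.lattice) (h2 : 2 * h ∈ L.lattice) :
    ∃ v : ℂ → ℂ, AnalyticAt ℂ v 0 ∧
      ∀ᶠ z in 𝓝 (0 : ℂ), ℘[L] (z + h) - ℘[L] h = z ^ 2 * v z := by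
  have hP : AnalyticAt ℂ ℘[L] (0 + h) := by
    rw [zero_add]; exact L.analyticOnNhd_weierstrassP h hh
  have hg : AnalyticAt ℂ (fun z ↦ ℘[L] (z + h) - ℘[L] h) 0 :=
    (hP.comp (f := fun z ↦ z + h) (by fun_prop)).sub analyticAt_const
  have hord : ((2 : ℕ) : ℕ∞) ≤ analyticOrderAt (fun z ↦ ℘[L] (z + h) - ℘[L] h) 0 := by
    rw [natCast_le_analyticOrderAt_iff_iteratedDeriv_eq_zero hg]
    intro i hi
    interval_cases i
    · simp
    · rw [iteratedDeriv_one]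
      have := ((L.hasDerivAt_weierstrassP (z := 0 + h) (by simpa)).comp_add_const 0 h).sub_const
        (℘[L] h)
      rw [this.deriv, zero_add, L.derivWeierstrassP_eq_zero_of_two_mul_mem h2]
  obtain ⟨v, hv, hev⟩ := (natCast_le_analyticOrderAt hg).mp hord
  exact ⟨v, hv, by simpa using hev⟩

open Classical in
/-- Translating the argument of `℘` by a half period acts as an involution on the values. -/
lemma exists_sub_mul_sub_eq_const {h : ℂ} (hh : h ∉ L.lattice) (h2 : 2 * h ∈ L.lattice) :
    ∃ c : ℂ, c ≠ 0 ∧ ∀ z, z ∉ L.lattice → z + h ∉ L.lattice →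
      (℘[L] z - ℘[L] h) * (℘[L] (z + h) - ℘[L] h) = c := by
  obtain ⟨v, hv, hev⟩ := L.exists_sub_eq_sq_mul hh h2
  set e := ℘[L] h with he
  set G : ℂ → ℂ := fun z ↦ if z ∈ L.lattice ∨ z + h ∈ L.lattice then v 0 else
    (℘[L] z - e) * (℘[L] (z + h) - e) with hG
  have hper : ∀ l ∈ L.lattice, ∀ z, G (z + l) = G z := by
    intro l hl z
    simp only [hG]
    rw [L.weierstrassP_add_of_mem hl, add_right_comm, L.weierstrassP_add_of_mem hl,
      L.lattice.add_mem_iff_left hl, L.lattice.add_mem_iff_left hl]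
  have hhalf : ∀ z, G (z + h) = G z := by
    intro z
    simp only [hG]
    rw [L.mem_lattice_add_two_mul_iff h2, L.weierstrassP_add_half_add_half h2, mul_comm]
    simp only [or_comm]
  have hnear : ∀ᶠ z in 𝓝[≠] (0 : ℂ), z ∉ L.lattice := by
    filter_upwards [self_mem_nhdsWithin, mem_nhdsWithin_of_mem_nhds
      (L.compl_lattice_sdiff_singleton_mem_nhds 0)] with w hw hw'
    simp_all
  have hnear' : ∀ᶠ z in 𝓝 (0 : ℂ), z + h ∉ L.lattice := by
    have hc : Tendsto (fun z : ℂ ↦ z + h) (𝓝 0) (𝓝 h) := by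
      have : Continuous (fun z : ℂ ↦ z + h) := by fun_prop
      simpa using this.tendsto 0
    exact hc.eventually (L.isClosed_lattice.isOpen_compl.mem_nhds hh)
  have h0 : AnalyticAt ℂ G 0 := by
    have hPe := L.analyticAt_weierstrassPExcept 0
    have han : AnalyticAt ℂ (fun z ↦ (z ^ 2 * (℘[L - (0 : ℂ)] z - e) + 1) * v z) 0 := by
      fun_prop
    refine han.congr ?_
    rw [eventually_nhdsWithin_iff] at hnear
    filter_upwards [hnear, hnear', hev] with z hz1 hz2 hz3
    by_cases hz0 : z = 0
    · simp [hG, hz0]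
    · have := L.ite_eq_one_sub_sq_mul_weierstrassP 0 (zero_mem _) z
      simp only [hz0, if_false, sub_zero] at this
      simp only [hG, hz1 hz0, hz2, or_self, if_false, hz3]
      have h3 : z ^ 2 * (0 : ℂ) ^ 2 = 0 := by simp
      simp at this
      linear_combination (-v z) * this
  have hana : Differentiable ℂ G := by
    intro z
    by_cases hz : z ∈ L.lattice
    · have h1 : DifferentiableAt ℂ (fun w ↦ G (w + -z)) z :=
        DifferentiableAt.comp (g := G) (f := fun w ↦ w + -z) z
          (by simpa using h0.differentiableAt) (by fun_prop)
      simpa [hper (-z) (neg_mem hz)] using h1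
    by_cases hz' : z + h ∈ L.lattice
    · have h1 : DifferentiableAt ℂ (fun w ↦ G (w + h + -(z + h))) z :=
        DifferentiableAt.comp (g := G) (f := fun w ↦ w + h + -(z + h)) z
          (by simpa using h0.differentiableAt) (by fun_prop)
      simpa only [hper (-(z + h)) (neg_mem hz'), hhalf] using h1
    · have h1 : DifferentiableAt ℂ (fun z ↦ (℘[L] z - e) * (℘[L] (z + h) - e)) z := by
        have a1 := (L.analyticOnNhd_weierstrassP z hz).differentiableAt
        have a2 : DifferentiableAt ℂ (fun w ↦ ℘[L] (w + h)) z :=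
          DifferentiableAt.comp (g := ℘[L]) (f := fun w ↦ w + h) z
            (L.analyticOnNhd_weierstrassP (z + h) hz').differentiableAt (by fun_prop)
        fun_prop
      refine h1.congr_of_eventuallyEq ?_
      have hc : Tendsto (fun w : ℂ ↦ w + h) (𝓝 z) (𝓝 (z + h)) := by
        have : Continuous (fun w : ℂ ↦ w + h) := by fun_prop
        exact this.tendsto z
      filter_upwards [L.isClosed_lattice.isOpen_compl.mem_nhds hz,
        hc.eventually (L.isClosed_lattice.isOpen_compl.mem_nhds hz')] with w hw hw'
      have hw1 : w ∉ L.lattice := hw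
      have hw2 : w + h ∉ L.lattice := hw'
      simp [hG, hw1, hw2]
  have hconst : ∀ z, G z = v 0 := fun z ↦ by
    rw [hana.apply_eq_apply_of_bounded (IsZLattice.isCompact_range_of_periodic L.lattice _
      hana.continuous fun z w hw ↦ hper w hw z).isBounded z 0]
    simp [hG]
  have hmain : ∀ z, z ∉ L.lattice → z + h ∉ L.lattice →
      (℘[L] z - e) * (℘[L] (z + h) - e) = v 0 := by
    intro z hz hz'
    simpa [hG, hz, hz'] using hconst z
  refine ⟨v 0, fun hv0 ↦ ?_, hmain⟩
  have hbig := L.tendsto_norm_weierstrassP_zero.eventually_gt_atTop ‖e‖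
  have hev2 : ∀ᶠ z in 𝓝 (0 : ℂ), ℘[L] (z + h) = e := by
    rw [eventually_nhdsWithin_iff] at hnear hbig
    filter_upwards [hnear, hnear', hbig] with z hz1 hz2 hz3
    by_cases hz0 : z = 0
    · simp [hz0, he]
    have := hmain z (hz1 hz0) hz2
    rw [hv0, mul_eq_zero, sub_eq_zero, sub_eq_zero] at this
    refine this.resolve_left fun h4 ↦ ?_
    exact absurd (hz3 hz0) (by rw [h4]; exact lt_irrefl _)
  refine L.not_eventuallyEq_const_weierstrassP hh e ?_
  have hc : Tendsto (fun w : ℂ ↦ w - h) (𝓝 h) (𝓝 0) := by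
    have : Continuous (fun w : ℂ ↦ w - h) := by fun_prop
    simpa using this.tendsto h
  simpa using hc.eventually hev2

lemma add_mem_lattice_of_weierstrassP_eq {h : ℂ} (hh : h ∉ L.lattice) (h2 : 2 * h ∈ L.lattice)
    {z : ℂ} (hz : z ∉ L.lattice) (he : ℘[L] z = ℘[L] h) : z + h ∈ L.lattice := by
  obtain ⟨c, hc, H⟩ := L.exists_sub_mul_sub_eq_const hh h2
  by_contra hzh
  exact hc (by rw [← H z hz hzh, he, sub_self, zero_mul])

end PeriodPair

lemma cubic_factor_of_three_roots {g₂ g₃ a b c : ℂ} (ha : 4 * a ^ 3 - g₂ * a - g₃ = 0)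
    (hb : 4 * b ^ 3 - g₂ * b - g₃ = 0) (hc : 4 * c ^ 3 - g₂ * c - g₃ = 0)
    (hab : a ≠ b) (hac : a ≠ c) (hbc : b ≠ c) :
    a + b + c = 0 ∧ g₂ = -4 * (a * b + a * c + b * c) ∧
      ∀ x, 4 * x ^ 3 - g₂ * x - g₃ = 4 * (x - a) * (x - b) * (x - c) := by
  have h1 : 4 * (a ^ 2 + a * b + b ^ 2) - g₂ = 0 :=
    (mul_eq_zero.mp (show (a - b) * (4 * (a ^ 2 + a * b + b ^ 2) - g₂) = 0 by
      linear_combination ha - hb)).resolve_left (sub_ne_zero.mpr hab)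
  have h2 : 4 * (a ^ 2 + a * c + c ^ 2) - g₂ = 0 :=
    (mul_eq_zero.mp (show (a - c) * (4 * (a ^ 2 + a * c + c ^ 2) - g₂) = 0 by
      linear_combination ha - hc)).resolve_left (sub_ne_zero.mpr hac)
  have h3 : a + b + c = 0 :=
    (mul_eq_zero.mp (show (b - c) * (a + b + c) = 0 by
      linear_combination (h1 - h2) / 4)).resolve_left (sub_ne_zero.mpr hbc)
  have h4 : g₂ = -4 * (a * b + a * c + b * c) := by
    linear_combination -h1 + (4 * (a + b)) * h3
  refine ⟨h3, h4, fun x ↦ ?_⟩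
  linear_combination ha + (-(x - a)) * h4 + 4 * (x ^ 2 - a ^ 2) * h3

namespace PeriodPair

variable (L : PeriodPair)

lemma deriv_derivWeierstrassP_eventuallyEq {h : ℂ} (hh : h ∉ L.lattice) :
    ∀ᶠ z in 𝓝 h, deriv ℘'[L] z = 6 * ℘[L] z ^ 2 - L.g₂ / 2 := by
  have hopen : ∀ᶠ z in 𝓝 h, z ∉ L.lattice := L.isClosed_lattice.isOpen_compl.mem_nhds hh
  have hP := L.analyticOnNhd_weierstrassP h hh
  have hP' := L.analyticOnNhd_derivWeierstrassP h hh
  have hne : ∀ᶠ z in 𝓝[≠] h, ℘'[L] z ≠ 0 := by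
    refine hP'.eventually_eq_zero_or_eventually_ne_zero.resolve_left fun h0 ↦ ?_
    obtain ⟨r, hr, hball⟩ := Metric.eventually_nhds_iff_ball.mp (h0.and hopen)
    refine L.not_eventuallyEq_const_weierstrassP hh (℘[L] h) ?_
    filter_upwards [Metric.ball_mem_nhds h hr] with z hz
    refine Metric.isOpen_ball.is_const_of_deriv_eq_zero
      (convex_ball h r).isPreconnected (fun w hw ↦ ?_) (fun w hw ↦ ?_) hz (Metric.mem_ball_self hr)
    · exact (L.hasDerivAt_weierstrassP (hball w hw).2).differentiableAt.differentiableWithinAt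
    · rw [L.deriv_weierstrassP]; exact (hball w hw).1
  have hpunct : ∀ᶠ z in 𝓝[≠] h, deriv ℘'[L] z = 6 * ℘[L] z ^ 2 - L.g₂ / 2 := by
    filter_upwards [hne, (hopen.eventually_nhds.filter_mono nhdsWithin_le_nhds)] with z hz hz2
    have hzL : z ∉ L.lattice := hz2.self_of_nhds
    have hd := L.hasDerivAt_weierstrassP hzL
    have hd' := (L.analyticOnNhd_derivWeierstrassP z hzL).differentiableAt.hasDerivAt
    have e1 : HasDerivAt (fun w ↦ ℘'[L] w ^ 2) _ z := hd'.pow 2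
    have e2 : HasDerivAt (fun w ↦ 4 * ℘[L] w ^ 3 - L.g₂ * ℘[L] w - L.g₃) _ z :=
      (((hd.pow 3).const_mul 4).sub (hd.const_mul L.g₂)).sub_const L.g₃
    have e3 := e1.congr_of_eventuallyEq
      (f₁ := fun w ↦ 4 * ℘[L] w ^ 3 - L.g₂ * ℘[L] w - L.g₃)
      (by filter_upwards [hz2] with w hw using (L.derivWeierstrassP_sq w hw).symm)
    have e4 := e2.unique e3
    have h2 : (2 * ℘'[L] z) ≠ 0 := mul_ne_zero two_ne_zero hz
    refine mul_left_cancel₀ h2 ?_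
    push_cast at e4
    simp only [pow_one] at e4
    linear_combination -e4
  have hcont : ContinuousAt (deriv ℘'[L]) h := hP'.deriv.continuousAt
  have hcont2 : ContinuousAt (fun z ↦ 6 * ℘[L] z ^ 2 - L.g₂ / 2) h := by
    have := hP.continuousAt
    fun_prop
  exact (hcont.eventuallyEq_nhds_iff_eventuallyEq_nhdsNE hcont2).mp hpunct

lemma five_mul_sumInvPow_six {h : ℂ} (hh : h ∉ L.lattice) :
    5 * L.sumInvPow h 6 = (℘'[L] h ^ 2 + ℘[L] h * (6 * ℘[L] h ^ 2 - L.g₂ / 2)) / 2 := by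
  have hP := L.analyticOnNhd_weierstrassP h hh
  have hP' := L.analyticOnNhd_derivWeierstrassP h hh
  have hco : iteratedDeriv 4 ℘[L] h = 24 * (5 * L.sumInvPow h 6) := by
    obtain ⟨r, h₁, h₂⟩ := Metric.nhds_basis_closedBall.mem_iff.mp
      (L.isClosed_lattice.isOpen_compl.mem_nhds hh)
    have h3 := (L.hasFPowerSeriesOnBall_weierstrassP h ⟨r, h₁.le⟩ h₁ h₂).hasFPowerSeriesAt
    have h4 := congrArg (·.coeff 4) (hP.hasFPowerSeriesAt.eq_formalMultilinearSeries h3)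
    simp [weierstrassPSeries, Nat.factorial] at h4
    rw [div_eq_iff (by norm_num)] at h4
    rw [h4]; ring
  have e1 := L.deriv_derivWeierstrassP_eventuallyEq hh
  have e2 : ∀ᶠ z in 𝓝 h, iteratedDeriv 3 ℘[L] z = 12 * ℘[L] z * ℘'[L] z := by
    filter_upwards [e1.eventually_nhds, L.isClosed_lattice.isOpen_compl.mem_nhds hh] with z hz hzL
    have : iteratedDeriv 2 ℘[L] = deriv ℘'[L] := by
      rw [iteratedDeriv_succ, iteratedDeriv_one, L.deriv_weierstrassP]
    rw [iteratedDeriv_succ, this, Filter.EventuallyEq.deriv_eq hz]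
    have hd := ((((L.hasDerivAt_weierstrassP hzL).pow 2).const_mul 6).sub_const (L.g₂ / 2)).deriv
    simp only [Pi.pow_apply] at hd
    rw [hd]
    push_cast; ring
  have e3 : iteratedDeriv 4 ℘[L] h = 12 * (℘'[L] h ^ 2 + ℘[L] h * (6 * ℘[L] h ^ 2 - L.g₂ / 2)) := by
    rw [iteratedDeriv_succ, Filter.EventuallyEq.deriv_eq e2]
    have hd := (((L.hasDerivAt_weierstrassP hh).const_mul 12).mul
      hP'.differentiableAt.hasDerivAt).deriv
    rw [e1.self_of_nhds] at hd
    refine hd.trans ?_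
    ring
  rw [hco] at e3
  linear_combination e3 / 24

end PeriodPair

/-- The period pair `2, 2 i y` of a rectangular lattice. -/
noncomputable def rectPeriodPair (y : ℝ) (hy : 0 < y) : PeriodPair where
  ω₁ := 2
  ω₂ := 2 * y * Complex.I
  indep := by
    rw [LinearIndependent.pair_iff]
    intro s t h
    have h1 := congrArg Complex.re h
    have h2 := congrArg Complex.im h
    simp at h1 h2
    exact ⟨h1, h2.resolve_right hy.ne'⟩

lemma mem_lattice_rectPeriodPair {y : ℝ} (hy : 0 < y) {z : ℂ} :
    z ∈ (rectPeriodPair y hy).lattice ↔ ∃ m n : ℤ, z.re = 2 * m ∧ z.im = 2 * n * y := by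
  rw [PeriodPair.mem_lattice]
  refine exists_congr fun m ↦ exists_congr fun n ↦ ?_
  simp only [rectPeriodPair, Complex.ext_iff]
  simp
  constructor
  · rintro ⟨h1, h2⟩; constructor <;> linarith
  · rintro ⟨h1, h2⟩; constructor <;> linarith

lemma notMem_lattice_rectPeriodPair_of_re {y : ℝ} (hy : 0 < y) {z : ℂ} (h0 : 0 < z.re)
    (h2 : z.re < 2) : z ∉ (rectPeriodPair y hy).lattice := by
  rw [mem_lattice_rectPeriodPair]
  rintro ⟨m, n, h, -⟩
  rw [h] at h0 h2
  have h0' : (0 : ℝ) < m := by linarith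
  have h2' : (m : ℝ) < 1 := by linarith
  norm_cast at h0' h2'
  lia

lemma notMem_lattice_rectPeriodPair_of_im {y : ℝ} (hy : 0 < y) {z : ℂ} (h0 : 0 < z.im)
    (h2 : z.im < 2 * y) : z ∉ (rectPeriodPair y hy).lattice := by
  rw [mem_lattice_rectPeriodPair]
  rintro ⟨m, n, -, h⟩
  rw [h] at h0 h2
  have h0' : (0 : ℝ) < n := by
    by_contra! hn
    nlinarith
  have h2' : (n : ℝ) < 1 := by
    by_contra! hn
    nlinarith
  norm_cast at h0' h2'
  lia

lemma weierstrassP_conj_rectPeriodPair {y : ℝ} (hy : 0 < y) (z : ℂ) :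
    ℘[rectPeriodPair y hy] (starRingEnd ℂ z) = starRingEnd ℂ (℘[rectPeriodPair y hy] z) := by
  have hmem : ∀ l ∈ (rectPeriodPair y hy).lattice,
      starRingEnd ℂ l ∈ (rectPeriodPair y hy).lattice := by
    intro l hl
    rw [mem_lattice_rectPeriodPair] at hl ⊢
    obtain ⟨m, n, h1, h2⟩ := hl
    exact ⟨m, -n, by simpa using h1, by simp [h2]⟩
  let σ : (rectPeriodPair y hy).lattice ≃ (rectPeriodPair y hy).lattice :=
    { toFun := fun l ↦ ⟨_, hmem l l.2⟩
      invFun := fun l ↦ ⟨_, hmem l l.2⟩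
      left_inv := fun l ↦ by simp
      right_inv := fun l ↦ by simp }
  simp only [PeriodPair.weierstrassP]
  rw [Complex.conj_tsum, ← σ.tsum_eq]
  congr with l
  simp [σ]

lemma weierstrassP_im_eq_zero_of_sub_conj_mem {y : ℝ} (hy : 0 < y) {z : ℂ}
    (h : z - starRingEnd ℂ z ∈ (rectPeriodPair y hy).lattice) :
    (℘[rectPeriodPair y hy] z).im = 0 := by
  rw [← Complex.conj_eq_iff_im, ← weierstrassP_conj_rectPeriodPair hy,
    ← PeriodPair.weierstrassP_add_of_mem _ h, add_sub_cancel]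

lemma weierstrassP_im_eq_zero_of_neg_sub_conj_mem {y : ℝ} (hy : 0 < y) {z : ℂ}
    (h : -z - starRingEnd ℂ z ∈ (rectPeriodPair y hy).lattice) :
    (℘[rectPeriodPair y hy] z).im = 0 := by
  rw [← Complex.conj_eq_iff_im, ← weierstrassP_conj_rectPeriodPair hy,
    ← PeriodPair.weierstrassP_add_of_mem _ h, add_sub_cancel, PeriodPair.weierstrassP_neg]

lemma hasSum_odd_add_odd_inv_pow_six {y : ℝ} (hy : 0 < y) :
    HasSum (fun p : ℤ × ℤ ↦
      (((2 * p.1 + 1 : ℤ) + (2 * p.2 + 1 : ℤ) * (y * Complex.I) : ℂ) ^ 6)⁻¹)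
      ((rectPeriodPair y hy).sumInvPow (1 + y * Complex.I) 6) := by
  have h := (rectPeriodPair y hy).hasSum_sumInvPow (1 + y * Complex.I) (r := 6) (by norm_num)
  rw [← (rectPeriodPair y hy).latticeEquivProd.symm.toEquiv.hasSum_iff,
    ← ((Equiv.addRight (1 : ℤ)).prodCongr (Equiv.addRight (1 : ℤ))).hasSum_iff] at h
  refine h.congr_fun ?_
  intro p
  simp only [Function.comp_apply]
  congr 2
  have := (rectPeriodPair y hy).latticeEquiv_symm_apply
    (((Equiv.addRight (1 : ℤ)).prodCongr (Equiv.addRight (1 : ℤ))) p)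
  refine Eq.trans ?_ (congrArg (fun x ↦ x - (1 + y * Complex.I)) this).symm
  simp [rectPeriodPair]
  ring

lemma strictMonoOn_or_strictAntiOn_of_deriv_ne_zero {f f' : ℝ → ℝ} {T : ℝ}
    (hcont : ContinuousOn f (Set.Icc 0 T))
    (hderiv : ∀ t ∈ Set.Ioo 0 T, HasDerivAt f (f' t) t) (hne : ∀ t ∈ Set.Ioo 0 T, f' t ≠ 0) :
    (StrictMonoOn f (Set.Icc 0 T) ∧ ∀ t ∈ Set.Ioo 0 T, 0 < f' t) ∨
      StrictAntiOn f (Set.Icc 0 T) := by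
  rcases hasDerivWithinAt_forall_lt_or_forall_gt_of_forall_ne (convex_Ioo 0 T)
    (fun t ht ↦ (hderiv t ht).hasDerivWithinAt) hne with h | h
  · right
    refine strictAntiOn_of_deriv_neg (convex_Icc 0 T) hcont fun t ht ↦ ?_
    rw [interior_Icc] at ht
    rw [(hderiv t ht).deriv]
    exact h t ht
  · left
    refine ⟨strictMonoOn_of_deriv_pos (convex_Icc 0 T) hcont fun t ht ↦ ?_, h⟩
    rw [interior_Icc] at ht
    rw [(hderiv t ht).deriv]
    exact h t ht

lemma endpoints_lt_of_deriv_sq_eq {f f' : ℝ → ℝ} {T α β γ : ℝ} (hT : 0 < T)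
    (hαγ : α ≠ γ) (hβγ : β ≠ γ) (hcont : ContinuousOn f (Set.Icc 0 T))
    (hderiv : ∀ t ∈ Set.Ioo 0 T, HasDerivAt f (f' t) t) (hne : ∀ t ∈ Set.Ioo 0 T, f' t ≠ 0)
    (h0 : f 0 = α) (h1 : f T = β)
    (hode : ∀ t ∈ Set.Ioo 0 T, f' t ^ 2 = 4 * (f t - α) * (β - f t) * (γ - f t)) :
    α < γ ∧ β < γ := by
  have hmem0 : (0 : ℝ) ∈ Set.Icc 0 T := ⟨le_rfl, hT.le⟩
  have hmemT : T ∈ Set.Icc 0 T := ⟨hT.le, le_rfl⟩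
  have hlt : ∀ t ∈ Set.Ioo 0 T, f t ≤ γ := by
    intro t ht
    have hpos : 0 < (f t - α) * (β - f t) := by
      rcases strictMonoOn_or_strictAntiOn_of_deriv_ne_zero hcont hderiv hne with ⟨h, -⟩ | h
      · have a1 := h hmem0 (Set.Ioo_subset_Icc_self ht) ht.1
        have a2 := h (Set.Ioo_subset_Icc_self ht) hmemT ht.2
        exact mul_pos (by linarith) (by linarith)
      · have a1 := h hmem0 (Set.Ioo_subset_Icc_self ht) ht.1
        have a2 := h (Set.Ioo_subset_Icc_self ht) hmemT ht.2
        exact mul_pos_of_neg_of_neg (by linarith) (by linarith)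
    have := pow_pos (abs_pos.mpr (hne t ht)) 2
    rw [sq_abs, hode t ht] at this
    by_contra! hcon
    nlinarith
  have hle : ∀ t ∈ Set.Icc 0 T, f t ≤ γ := by
    intro t ht
    rw [← closure_Ioo hT.ne] at ht hcont
    exact le_on_closure hlt hcont continuousOn_const ht
  exact ⟨lt_of_le_of_ne (h0 ▸ hle 0 hmem0) hαγ, lt_of_le_of_ne (h1 ▸ hle T hmemT) hβγ⟩

lemma EllK_eq_of_deriv_sq_eq {f f' : ℝ → ℝ} {T α β γ : ℝ} (hT : 0 < T)
    (hαβ : α < β) (hβγ : β < γ) (hcont : ContinuousOn f (Set.Icc 0 T))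
    (hderiv : ∀ t ∈ Set.Ioo 0 T, HasDerivAt f (f' t) t) (hne : ∀ t ∈ Set.Ioo 0 T, f' t ≠ 0)
    (h0 : f 0 = α) (h1 : f T = β)
    (hode : ∀ t ∈ Set.Ioo 0 T, f' t ^ 2 = 4 * (f t - α) * (β - f t) * (γ - f t)) :
    EllK √((β - α) / (γ - α)) = √(γ - α) * T := by
  have hmem0 : (0 : ℝ) ∈ Set.Icc 0 T := ⟨le_rfl, hT.le⟩
  have hmemT : T ∈ Set.Icc 0 T := ⟨hT.le, le_rfl⟩
  obtain ⟨hmono, hpos⟩ := (strictMonoOn_or_strictAntiOn_of_deriv_ne_zero hcont hderiv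
    hne).resolve_right fun h ↦ by
      have := h hmem0 hmemT hT
      linarith
  have hβα : 0 < β - α := by linarith
  have hγα : 0 < γ - α := by linarith
  have hbd : ∀ t ∈ Set.Ioo 0 T, α < f t ∧ f t < β := fun t ht ↦
    ⟨h0 ▸ hmono hmem0 (Set.Ioo_subset_Icc_self ht) ht.1,
      h1 ▸ hmono (Set.Ioo_subset_Icc_self ht) hmemT ht.2⟩
  set s : ℝ → ℝ := fun t ↦ √((f t - α) / (β - α)) with hs
  have hspos : ∀ t ∈ Set.Ioo 0 T, 0 < s t := fun t ht ↦
    Real.sqrt_pos.mpr (div_pos (by linarith [hbd t ht]) hβα)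
  have hssq : ∀ t ∈ Set.Ioo 0 T, s t ^ 2 = (f t - α) / (β - α) := fun t ht ↦
    Real.sq_sqrt (div_pos (by linarith [hbd t ht]) hβα).le
  have hsderiv : ∀ t ∈ Set.Ioo 0 T, HasDerivAt s (f' t / (β - α) / (2 * s t)) t := fun t ht ↦
    (((hderiv t ht).sub_const α).div_const (β - α)).sqrt
      (div_pos (by linarith [hbd t ht]) hβα).ne'
  have hsmono : StrictMonoOn s (Set.Icc 0 T) := by
    intro a ha b hb hab
    have h2 := hmono hmem0 hb (lt_of_le_of_lt ha.1 hab)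
    rw [h0] at h2
    have h3 := hmono ha hb hab
    refine (Real.sqrt_lt_sqrt_iff_of_pos (div_pos (by linarith) hβα)).mpr ?_
    gcongr
  have hs0 : s 0 = 0 := by simp [hs, h0]
  have hs1 : s T = 1 := by simp [hs, h1, hβα.ne']
  have hscont : ContinuousOn s (Set.Icc 0 T) :=
    ((hcont.sub continuousOn_const).div_const _).sqrt
  have himage : s '' Set.Ioo 0 T = Set.Ioo 0 1 := by
    refine Set.Subset.antisymm ?_ ?_
    · rintro _ ⟨t, ht, rfl⟩
      exact ⟨hspos t ht, hs1 ▸ hsmono (Set.Ioo_subset_Icc_self ht) hmemT ht.2⟩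
    · have := intermediate_value_Ioo hT.le hscont
      rwa [hs0, hs1] at this
  have hκ : √((β - α) / (γ - α)) ^ 2 = (β - α) / (γ - α) :=
    Real.sq_sqrt (div_pos hβα hγα).le
  rw [EllK, intervalIntegral.integral_of_le zero_le_one, integral_Ioc_eq_integral_Ioo, ← himage,
    integral_image_eq_integral_abs_deriv_smul measurableSet_Ioo
      (fun t ht ↦ (hsderiv t ht).hasDerivWithinAt) (hsmono.injOn.mono Set.Ioo_subset_Icc_self),
    setIntegral_congr_fun (g := fun _ ↦ √(γ - α)) measurableSet_Ioo]
  · simp [hT.le, mul_comm]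
  · intro t ht
    obtain ⟨hb1, hb2⟩ := hbd t ht
    have hp := hpos t ht
    have hsp := hspos t ht
    have hrad : (1 - s t ^ 2) * (1 - √((β - α) / (γ - α)) ^ 2 * s t ^ 2) =
        (β - f t) * (γ - f t) / ((β - α) * (γ - α)) := by
      rw [hκ, hssq t ht]; field_simp; ring
    have hradpos : 0 < (β - f t) * (γ - f t) / ((β - α) * (γ - α)) :=
      div_pos (mul_pos (by linarith) (by linarith)) (mul_pos hβα hγα)
    have hdpos : 0 < f' t / (β - α) / (2 * s t) := by positivity
    simp only [smul_eq_mul]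
    rw [hrad, abs_of_pos hdpos]
    refine (Real.sqrt_sq (by positivity)).symm.trans (congrArg _ ?_)
    rw [mul_pow, div_pow, div_pow, div_pow 1, Real.sq_sqrt hradpos.le, mul_pow, hssq t ht,
      hode t ht]
    have n1 : f t - α ≠ 0 := by linarith
    have n2 : β - f t ≠ 0 := by linarith
    have n3 : γ - f t ≠ 0 := by linarith
    field_simp
    norm_num

lemma hasDerivAt_re_weierstrassP_comp {L : PeriodPair} {g : ℝ → ℂ} {g' : ℂ} {t : ℝ}
    (hg : HasDerivAt g g' t) (hL : ∀ t, g t ∉ L.lattice) (him : ∀ t, (℘[L] (g t)).im = 0) :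
    HasDerivAt (fun t ↦ (℘[L] (g t)).re) (℘'[L] (g t) * g').re t ∧
      (((℘'[L] (g t) * g').re : ℝ) : ℂ) = ℘'[L] (g t) * g' := by
  have h1 : HasDerivAt (fun t ↦ ℘[L] (g t)) (℘'[L] (g t) * g') t :=
    (L.hasDerivAt_weierstrassP (hL t)).comp t hg
  have h2 : HasDerivAt (fun t ↦ (℘[L] (g t)).re) (℘'[L] (g t) * g').re t :=
    (Complex.reCLM.hasFDerivAt.comp_hasDerivAt t h1)
  have h3 : HasDerivAt (fun t ↦ (((℘[L] (g t)).re : ℝ) : ℂ)) (((℘'[L] (g t) * g').re : ℝ) : ℂ) t :=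
    h2.ofReal_comp
  have h4 : (fun t ↦ (((℘[L] (g t)).re : ℝ) : ℂ)) = fun t ↦ ℘[L] (g t) := by
    ext t
    exact Complex.ext (by simp) (by simp [him t])
  rw [h4] at h3
  exact ⟨h2, h3.unique h1⟩

/-- Every `y > 0` is the ratio `K(k') / K(k)` for some modulus `k`, and the sum of `(m + i n y)⁻⁶`
over odd `m`, `n` is a polynomial in `k` and `K(k)`. -/
lemma exists_modulus_of_pos {y : ℝ} (hy : 0 < y) :
    ∃ k ∈ Set.Ioo (0 : ℝ) 1, EllK √(1 - k ^ 2) = y * EllK k ∧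
      HasSum (fun p : ℤ × ℤ ↦
        (((2 * p.1 + 1 : ℤ) + (2 * p.2 + 1 : ℤ) * (y * Complex.I) : ℂ) ^ 6)⁻¹)
        ((-(1 / 15) * (EllK k ^ 6 * (k ^ 2 * (1 - k ^ 2) * (2 * k ^ 2 - 1))) : ℝ) : ℂ) := by
  set L := rectPeriodPair y hy with hL
  have hmem : ∀ z : ℂ, z ∈ L.lattice ↔ ∃ m n : ℤ, z.re = 2 * m ∧ z.im = 2 * n * y :=
    fun z ↦ mem_lattice_rectPeriodPair hy
  have hre : ∀ z : ℂ, 0 < z.re → z.re < 2 → z ∉ L.lattice := fun z ↦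
    notMem_lattice_rectPeriodPair_of_re hy
  have him : ∀ z : ℂ, 0 < z.im → z.im < 2 * y → z ∉ L.lattice := fun z ↦
    notMem_lattice_rectPeriodPair_of_im hy
  have n1 : (1 : ℂ) ∉ L.lattice := hre _ (by simp) (by simp)
  have n2 : (y * Complex.I : ℂ) ∉ L.lattice := him _ (by simpa) (by simp; linarith)
  have n3 : (1 + y * Complex.I : ℂ) ∉ L.lattice := him _ (by simpa) (by simp; linarith)
  have d1 : 2 * (1 : ℂ) ∈ L.lattice := (hmem _).mpr ⟨1, 0, by simp, by simp⟩
  have d2 : 2 * (y * Complex.I : ℂ) ∈ L.lattice := (hmem _).mpr ⟨0, 1, by simp, by simp⟩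
  have d3 : 2 * (1 + y * Complex.I : ℂ) ∈ L.lattice := (hmem _).mpr ⟨1, 1, by simp, by simp⟩
  have root : ∀ h : ℂ, h ∉ L.lattice → 2 * h ∈ L.lattice →
      4 * ℘[L] h ^ 3 - L.g₂ * ℘[L] h - L.g₃ = 0 := fun h hh h2 ↦ by
    rw [← L.derivWeierstrassP_sq h hh, L.derivWeierstrassP_eq_zero_of_two_mul_mem h2]; simp
  have ne12 : ℘[L] 1 ≠ ℘[L] (y * Complex.I) := fun h ↦
    n3 (L.add_mem_lattice_of_weierstrassP_eq n2 d2 n1 h)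
  have ne13 : ℘[L] 1 ≠ ℘[L] (1 + y * Complex.I) := fun h ↦
    him (1 + (1 + y * Complex.I)) (by simpa) (by simp; linarith)
      (L.add_mem_lattice_of_weierstrassP_eq n3 d3 n1 h)
  have ne23 : ℘[L] (y * Complex.I) ≠ ℘[L] (1 + y * Complex.I) := fun h ↦
    hre (y * Complex.I + (1 + y * Complex.I)) (by simp) (by simp)
      (L.add_mem_lattice_of_weierstrassP_eq n3 d3 n2 h)
  obtain ⟨hsum, hg2, hfac⟩ := cubic_factor_of_three_roots (root _ n1 d1) (root _ n2 d2)
    (root _ n3 d3) ne12 ne13 ne23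
  have hP'ne : ∀ z : ℂ, z ∉ L.lattice → z + 1 ∉ L.lattice → z + y * Complex.I ∉ L.lattice →
      z + (1 + y * Complex.I) ∉ L.lattice → ℘'[L] z ≠ 0 := by
    intro z hz h1 h2 h3 h0
    have h4 := L.derivWeierstrassP_sq z hz
    rw [hfac, h0] at h4
    simp only [ne_eq, OfNat.ofNat_ne_zero, not_false_eq_true, zero_pow, zero_eq_mul, mul_eq_zero,
      false_or, sub_eq_zero] at h4
    rcases h4 with (h4 | h4) | h4
    · exact h1 (L.add_mem_lattice_of_weierstrassP_eq n1 d1 hz h4)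
    · exact h2 (L.add_mem_lattice_of_weierstrassP_eq n2 d2 hz h4)
    · exact h3 (L.add_mem_lattice_of_weierstrassP_eq n3 d3 hz h4)
  have hHL : ∀ t : ℝ, (t + y * Complex.I : ℂ) ∉ L.lattice := fun t ↦
    him _ (by simpa) (by simp; linarith)
  have hVL : ∀ t : ℝ, (1 + t * Complex.I : ℂ) ∉ L.lattice := fun t ↦ hre _ (by simp) (by simp)
  have hHim : ∀ t : ℝ, (℘[L] (t + y * Complex.I)).im = 0 := fun t ↦
    weierstrassP_im_eq_zero_of_sub_conj_mem hy ((hmem _).mpr ⟨0, 1, by simp, by simp; ring⟩)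
  have hVim : ∀ t : ℝ, (℘[L] (1 + t * Complex.I)).im = 0 := fun t ↦
    weierstrassP_im_eq_zero_of_neg_sub_conj_mem hy
      ((hmem _).mpr ⟨-1, 0, by simp; norm_num, by simp⟩)
  set e₁ := (℘[L] 1).re with he1
  set e₂ := (℘[L] (y * Complex.I)).re with he2
  set e₃ := (℘[L] (1 + y * Complex.I)).re with he3
  have c1 : ℘[L] 1 = (e₁ : ℂ) := Complex.ext (by simp [he1]) (by simpa using hVim 0)
  have c2 : ℘[L] (y * Complex.I) = (e₂ : ℂ) := Complex.ext (by simp [he2]) (by simpa using hHim 0)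
  have c3 : ℘[L] (1 + y * Complex.I) = (e₃ : ℂ) := Complex.ext (by simp [he3]) (by simpa using hVim y)
  have r12 : e₁ ≠ e₂ := fun h ↦ ne12 (by rw [c1, c2, h])
  have r13 : e₁ ≠ e₃ := fun h ↦ ne13 (by rw [c1, c3, h])
  have r23 : e₂ ≠ e₃ := fun h ↦ ne23 (by rw [c2, c3, h])
  rw [c1, c2, c3] at hsum hg2 hfac
  have hgH : ∀ t : ℝ, HasDerivAt (fun t : ℝ ↦ (t + y * Complex.I : ℂ)) 1 t := fun t ↦
    (Complex.ofRealCLM.hasDerivAt).add_const _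
  have hgV : ∀ t : ℝ, HasDerivAt (fun t : ℝ ↦ (1 + t * Complex.I : ℂ)) Complex.I t := fun t ↦ by
    simpa using ((Complex.ofRealCLM.hasDerivAt (x := t)).mul_const Complex.I).const_add (1 : ℂ)
  have hH := fun t ↦ hasDerivAt_re_weierstrassP_comp (hgH t) hHL hHim
  have hV := fun t ↦ hasDerivAt_re_weierstrassP_comp (hgV t) hVL hVim
  have cH : ∀ t : ℝ, ((℘[L] (t + y * Complex.I)).re : ℂ) = ℘[L] (t + y * Complex.I) := fun t ↦
    Complex.ext (by simp) (by simp [hHim t])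
  have cV : ∀ t : ℝ, ((℘[L] (1 + t * Complex.I)).re : ℂ) = ℘[L] (1 + t * Complex.I) := fun t ↦
    Complex.ext (by simp) (by simp [hVim t])
  have odeH : ∀ t ∈ Set.Ioo (0 : ℝ) 1, (℘'[L] (t + y * Complex.I) * 1).re ^ 2 =
      4 * ((℘[L] (t + y * Complex.I)).re - e₂) * (e₃ - (℘[L] (t + y * Complex.I)).re) *
        (e₁ - (℘[L] (t + y * Complex.I)).re) := by
    intro t _
    have h1 := (L.derivWeierstrassP_sq _ (hHL t)).trans (hfac _)
    apply Complex.ofReal_injective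
    push_cast
    rw [(hH t).2, cH t]
    linear_combination h1
  have odeV : ∀ t ∈ Set.Ioo (0 : ℝ) y, (-(℘'[L] (1 + t * Complex.I) * Complex.I).re) ^ 2 =
      4 * (-(℘[L] (1 + t * Complex.I)).re - -e₁) * (-e₃ - -(℘[L] (1 + t * Complex.I)).re) *
        (-e₂ - -(℘[L] (1 + t * Complex.I)).re) := by
    intro t _
    have h1 := (L.derivWeierstrassP_sq _ (hVL t)).trans (hfac _)
    apply Complex.ofReal_injective
    push_cast
    rw [(hV t).2, cV t]
    linear_combination (-1 : ℂ) * h1 + (℘'[L] (1 + t * Complex.I)) ^ 2 * Complex.I_sq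
  have neH : ∀ t ∈ Set.Ioo (0 : ℝ) 1, (℘'[L] (t + y * Complex.I) * 1).re ≠ 0 := by
    intro t ht h0
    have h1 := (hH t).2
    rw [h0, mul_one] at h1
    refine hP'ne _ (hHL t) (him _ (by simpa) (by simp; linarith))
      (hre _ (by simpa using ht.1) (by simpa using ht.2.trans one_lt_two))
      (hre _ (by simpa using by linarith [ht.1]) (by simp; linarith [ht.2])) ?_
    rw [← h1]; simp
  have neV : ∀ t ∈ Set.Ioo (0 : ℝ) y, -(℘'[L] (1 + t * Complex.I) * Complex.I).re ≠ 0 := by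
    intro t ht h0
    have h1 := (hV t).2
    rw [neg_eq_zero.mp h0] at h1
    refine hP'ne _ (hVL t) (him _ (by simpa using ht.1) (by simp; linarith [ht.2]))
      (hre _ (by simp) (by simp))
      (him _ (by simpa using by linarith [ht.1]) (by simp; linarith [ht.2])) ?_
    simpa using h1.symm
  have contH : ContinuousOn (fun t : ℝ ↦ (℘[L] (t + y * Complex.I)).re) (Set.Icc 0 1) :=
    fun t _ ↦ (hH t).1.continuousAt.continuousWithinAt
  have contV : ContinuousOn (fun t : ℝ ↦ -(℘[L] (1 + t * Complex.I)).re) (Set.Icc 0 y) :=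
    fun t _ ↦ (hV t).1.neg.continuousAt.continuousWithinAt
  have ordH := endpoints_lt_of_deriv_sq_eq one_pos r12.symm r13.symm contH
    (fun t _ ↦ (hH t).1) neH (by simp [he2]) (by simp [he3]) odeH
  have ordV := endpoints_lt_of_deriv_sq_eq hy (by simpa using r12) (by simpa using r23.symm) contV
    (fun t _ ↦ (hV t).1.neg) neV (by simp [he1]) (by simp [he3]) odeV
  have o31 : e₃ < e₁ := ordH.2
  have o23 : e₂ < e₃ := by linarith [ordV.2]
  have KH := EllK_eq_of_deriv_sq_eq one_pos o23 o31 contH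
    (fun t _ ↦ (hH t).1) neH (by simp [he2]) (by simp [he3]) odeH
  have KV := EllK_eq_of_deriv_sq_eq hy (neg_lt_neg o31) (neg_lt_neg o23) contV
    (fun t _ ↦ (hV t).1.neg) neV (by simp [he1]) (by simp [he3]) odeV
  have hA : 0 < e₁ - e₂ := by linarith
  have hA' : e₁ - e₂ ≠ 0 := hA.ne'
  have hk2 : √((e₃ - e₂) / (e₁ - e₂)) ^ 2 = (e₃ - e₂) / (e₁ - e₂) :=
    Real.sq_sqrt (div_pos (by linarith) hA).le
  refine ⟨√((e₃ - e₂) / (e₁ - e₂)), ⟨Real.sqrt_pos.mpr (div_pos (by linarith) hA), ?_⟩, ?_, ?_⟩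
  · rw [Real.sqrt_lt' one_pos, div_lt_iff₀ hA]; linarith
  · rw [hk2, KH]
    rw [show 1 - (e₃ - e₂) / (e₁ - e₂) = (-e₃ - -e₁) / (-e₂ - -e₁) by
      rw [show -e₂ - -e₁ = e₁ - e₂ by ring]; field_simp; ring, KV,
      show -e₂ - -e₁ = e₁ - e₂ by ring]
    ring
  · have hS := hasSum_odd_add_odd_inv_pow_six hy
    have h5 := L.five_mul_sumInvPow_six n3
    rw [L.derivWeierstrassP_eq_zero_of_two_mul_mem d3, hg2, c3] at h5
    have hreal : -(1 / 15) * (EllK √((e₃ - e₂) / (e₁ - e₂)) ^ 6 * (√((e₃ - e₂) / (e₁ - e₂)) ^ 2 *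
        (1 - √((e₃ - e₂) / (e₁ - e₂)) ^ 2) * (2 * √((e₃ - e₂) / (e₁ - e₂)) ^ 2 - 1))) =
        (e₃ - e₂) * (e₃ - e₁) * ((e₃ - e₂) + (e₃ - e₁)) / 15 := by
      rw [hk2, KH, mul_one, show √(e₁ - e₂) ^ 6 = (√(e₁ - e₂) ^ 2) ^ 3 by ring,
        Real.sq_sqrt hA.le]
      field_simp
      ring
    rw [hreal]
    convert! hS using 1
    push_cast
    have hs' : (e₁ : ℂ) = -e₂ - e₃ := by linear_combination hsum
    rw [← mul_right_inj' (show (5 : ℂ) ≠ 0 by norm_num), h5, hs']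
    ring

/-- The integral of `(1 - m sin² θ) ^ p` over `[0, π/2]`: the complete elliptic integrals of the
first and second kind, in terms of the parameter `m = k²`, are the cases `p = -1/2` and `p = 1/2`. -/
noncomputable def ellInt (p m : ℝ) : ℝ :=
  ∫ θ in (0 : ℝ)..(π / 2), (1 - m * Real.sin θ ^ 2) ^ p

lemma one_sub_mul_sin_sq_pos {m : ℝ} (hm : m < 1) (θ : ℝ) : 0 < 1 - m * Real.sin θ ^ 2 := by
  rcases le_total m 0 with h | h <;>
  nlinarith [Real.sin_sq_le_one θ, sq_nonneg (Real.sin θ)]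

lemma continuous_one_sub_mul_sin_sq_rpow (p : ℝ) {m : ℝ} (hm : m < 1) :
    Continuous fun θ ↦ (1 - m * Real.sin θ ^ 2) ^ p :=
  Continuous.rpow_const (by fun_prop) fun θ ↦ .inl (one_sub_mul_sin_sq_pos hm θ).ne'

lemma hasDerivAt_ellInt_aux {p m : ℝ} (hp : p ≤ 1) (h0 : 0 ≤ m) (hm : m < 1) :
    HasDerivAt (ellInt p)
      (∫ θ in (0 : ℝ)..(π / 2), -Real.sin θ ^ 2 * p * (1 - m * Real.sin θ ^ 2) ^ (p - 1)) m := by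
  have hs : Set.Iio ((1 + m) / 2) ∈ 𝓝 m := Iio_mem_nhds (by linarith)
  have hlt : ∀ x ∈ Set.Iio ((1 + m) / 2), x < 1 := fun x hx ↦ by
    have := Set.mem_Iio.mp hx
    linarith
  refine (intervalIntegral.hasDerivAt_integral_of_dominated_loc_of_deriv_le (𝕜 := ℝ)
    (F := fun m θ ↦ (1 - m * Real.sin θ ^ 2) ^ p)
    (F' := fun m θ ↦ -Real.sin θ ^ 2 * p * (1 - m * Real.sin θ ^ 2) ^ (p - 1))
    (bound := fun _ ↦ |p| * (1 - (1 + m) / 2) ^ (p - 1))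
    hs ?_ ?_ ?_ ?_ ?_ ?_).2
  · filter_upwards [hs] with x hx
    exact (continuous_one_sub_mul_sin_sq_rpow p (hlt x hx)).aestronglyMeasurable
  · exact (continuous_one_sub_mul_sin_sq_rpow p hm).intervalIntegrable _ _
  · exact (Continuous.mul (by fun_prop)
      (continuous_one_sub_mul_sin_sq_rpow (p - 1) hm)).aestronglyMeasurable
  · refine .of_forall fun θ _ x hx ↦ ?_
    have h1 := one_sub_mul_sin_sq_pos (hlt x hx) θ
    have h2 := Set.mem_Iio.mp hx
    have h3 : 1 - (1 + m) / 2 ≤ 1 - x * Real.sin θ ^ 2 := by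
      rcases le_total x 0 with h | h <;>
      nlinarith [Real.sin_sq_le_one θ, sq_nonneg (Real.sin θ)]
    rw [norm_mul, norm_mul, Real.norm_eq_abs, Real.norm_eq_abs, Real.norm_eq_abs, abs_neg,
      abs_of_nonneg (sq_nonneg _), abs_of_nonneg (Real.rpow_nonneg h1.le _)]
    have h4 := Real.rpow_le_rpow_of_nonpos (by linarith) h3 (sub_nonpos.mpr hp)
    have h5 := Real.sin_sq_le_one θ
    have h6 : Real.sin θ ^ 2 * |p| ≤ |p| := by nlinarith [abs_nonneg p]
    gcongr
  · simp
  · refine .of_forall fun θ _ x hx ↦ ?_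
    have h1 := one_sub_mul_sin_sq_pos (hlt x hx) θ
    have h2 : HasDerivAt (fun x ↦ 1 - x * Real.sin θ ^ 2) (-Real.sin θ ^ 2) x := by
      simpa using ((hasDerivAt_id x).mul_const (Real.sin θ ^ 2)).const_sub 1
    exact h2.rpow_const (.inl h1.ne')

lemma hasDerivAt_ellInt {p m : ℝ} (hp : p ≤ 1) (h0 : 0 < m) (hm : m < 1) :
    HasDerivAt (ellInt p) (p * (ellInt p m - ellInt (p - 1) m) / m) m := by
  convert! hasDerivAt_ellInt_aux hp h0.le hm using 1
  rw [div_eq_iff h0.ne', mul_comm _ m, ← intervalIntegral.integral_const_mul, ellInt, ellInt,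
    ← intervalIntegral.integral_sub ((continuous_one_sub_mul_sin_sq_rpow p hm).intervalIntegrable _ _)
      ((continuous_one_sub_mul_sin_sq_rpow (p - 1) hm).intervalIntegrable _ _),
    ← intervalIntegral.integral_const_mul]
  congr with θ
  have h1 := one_sub_mul_sin_sq_pos hm θ
  rw [show (1 - m * Real.sin θ ^ 2) ^ p =
    (1 - m * Real.sin θ ^ 2) ^ (p - 1) * (1 - m * Real.sin θ ^ 2) by
      rw [← Real.rpow_add_one h1.ne']; simp]
  ring

lemma one_sub_mul_ellInt_neg_three_halves {m : ℝ} (hm : m < 1) :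
    (1 - m) * ellInt (-1 / 2 - 1) m = ellInt (1 / 2) m := by
  have hder : ∀ θ, HasDerivAt
      (fun θ ↦ m * (Real.sin θ * Real.cos θ) * (1 - m * Real.sin θ ^ 2) ^ (-1 / 2 : ℝ))
      ((1 - m * Real.sin θ ^ 2) ^ (1 / 2 : ℝ) -
        (1 - m) * (1 - m * Real.sin θ ^ 2) ^ (-1 / 2 - 1 : ℝ)) θ := by
    intro θ
    have h1 := one_sub_mul_sin_sq_pos hm θ
    have h2 : HasDerivAt (fun θ ↦ 1 - m * Real.sin θ ^ 2)
        (-(m * (2 * Real.sin θ * Real.cos θ))) θ := by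
      simpa using (((Real.hasDerivAt_sin θ).pow 2).const_mul m).const_sub 1
    convert! (((Real.hasDerivAt_sin θ).mul (Real.hasDerivAt_cos θ)).const_mul m).mul
      (h2.rpow_const (p := -1 / 2) (.inl h1.ne')) using 1
    have e1 : (1 - m * Real.sin θ ^ 2) ^ (-1 / 2 : ℝ) =
        (1 - m * Real.sin θ ^ 2) ^ (-1 / 2 - 1 : ℝ) * (1 - m * Real.sin θ ^ 2) := by
      rw [← Real.rpow_add_one h1.ne']; norm_num
    have e2 : (1 - m * Real.sin θ ^ 2) ^ (1 / 2 : ℝ) =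
        (1 - m * Real.sin θ ^ 2) ^ (-1 / 2 - 1 : ℝ) * (1 - m * Real.sin θ ^ 2) ^ 2 := by
      rw [← Real.rpow_add_natCast h1.ne']; norm_num
    rw [e1, e2]
    simp only [Pi.mul_apply]
    linear_combination (m ^ 2 * Real.sin θ ^ 2 + m * (1 - m * Real.sin θ ^ 2)) *
      (1 - m * Real.sin θ ^ 2) ^ (-1 / 2 - 1 : ℝ) * (-Real.sin_sq_add_cos_sq θ)
  have hc1 := continuous_one_sub_mul_sin_sq_rpow (1 / 2) hm
  have hc2 := (continuous_one_sub_mul_sin_sq_rpow (-1 / 2 - 1) hm).const_mul (1 - m)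
  have h := intervalIntegral.integral_eq_sub_of_hasDerivAt (a := 0) (b := π / 2)
    (fun θ _ ↦ hder θ) ((hc1.sub hc2).intervalIntegrable _ _)
  rw [intervalIntegral.integral_sub (hc1.intervalIntegrable _ _) (hc2.intervalIntegrable _ _),
    intervalIntegral.integral_const_mul] at h
  simp only [Real.sin_pi_div_two, Real.cos_pi_div_two, Real.sin_zero] at h
  rw [ellInt, ellInt]
  linarith

lemma hasDerivAt_ellInt_half {m : ℝ} (h0 : 0 < m) (hm : m < 1) :
    HasDerivAt (ellInt (1 / 2)) ((ellInt (1 / 2) m - ellInt (-1 / 2) m) / (2 * m)) m := by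
  convert! hasDerivAt_ellInt (p := 1 / 2) (by norm_num) h0 hm using 1
  rw [show (1 / 2 - 1 : ℝ) = -1 / 2 by norm_num]
  field_simp

lemma hasDerivAt_ellInt_neg_half {m : ℝ} (h0 : 0 < m) (hm : m < 1) :
    HasDerivAt (ellInt (-1 / 2))
      ((ellInt (1 / 2) m / (1 - m) - ellInt (-1 / 2) m) / (2 * m)) m := by
  convert! hasDerivAt_ellInt (p := -1 / 2) (by norm_num) h0 hm using 1
  have h1 : 1 - m ≠ 0 := by linarith
  rw [← one_sub_mul_ellInt_neg_three_halves hm]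
  field_simp
  ring

lemma ellInt_neg_half_le {m : ℝ} (h0 : 0 < m) (hm : m ≤ 1) :
    ‖ellInt (-1 / 2) (1 - m)‖ ≤ m ^ (-1 / 2 : ℝ) * |π / 2 - 0| := by
  refine intervalIntegral.norm_integral_le_of_norm_le_const fun θ _ ↦ ?_
  have h1 := one_sub_mul_sin_sq_pos (show 1 - m < 1 by linarith) θ
  rw [Real.norm_of_nonneg (Real.rpow_nonneg h1.le _)]
  refine Real.rpow_le_rpow_of_nonpos h0 ?_ (by norm_num)
  nlinarith [Real.sin_sq_le_one θ, sq_nonneg (Real.sin θ)]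

lemma ellInt_zero (p : ℝ) : ellInt p 0 = π / 2 := by simp [ellInt]

lemma ellInt_half_one : ellInt (1 / 2) 1 = 1 := by
  rw [ellInt, intervalIntegral.integral_congr (g := Real.cos)]
  · simp
  · intro θ hθ
    rw [Set.uIcc_of_le (by positivity)] at hθ
    simp only
    rw [one_mul, ← Real.cos_sq', ← Real.sqrt_eq_rpow, Real.sqrt_sq]
    exact Real.cos_nonneg_of_mem_Icc ⟨by linarith [hθ.1, Real.pi_pos], hθ.2⟩

lemma continuous_ellInt_half : Continuous (ellInt (1 / 2)) := by
  refine intervalIntegral.continuous_parametric_intervalIntegral_of_continuous'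
    (f := fun m θ ↦ (1 - m * Real.sin θ ^ 2) ^ (1 / 2 : ℝ)) ?_ _ _
  exact Continuous.rpow_const (by fun_prop) fun _ ↦ .inr (by norm_num)

/-- **Legendre's relation** between complete elliptic integrals. -/
lemma legendre_relation {m : ℝ} (h0 : 0 < m) (hm : m < 1) :
    ellInt (1 / 2) m * ellInt (-1 / 2) (1 - m) + ellInt (1 / 2) (1 - m) * ellInt (-1 / 2) m
      - ellInt (-1 / 2) m * ellInt (-1 / 2) (1 - m) = π / 2 := by
  set W : ℝ → ℝ := fun m ↦ ellInt (1 / 2) m * ellInt (-1 / 2) (1 - m)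
    + ellInt (1 / 2) (1 - m) * ellInt (-1 / 2) m - ellInt (-1 / 2) m * ellInt (-1 / 2) (1 - m)
    with hW
  have hder : ∀ x ∈ Set.Ioo (0 : ℝ) 1, HasDerivAt W 0 x := by
    intro x hx
    have hx1 : 0 < 1 - x := by linarith [hx.2]
    have hx0 := hx.1
    have a1 := hasDerivAt_ellInt_half hx.1 hx.2
    have a2 := hasDerivAt_ellInt_neg_half hx.1 hx.2
    have s : HasDerivAt (fun x : ℝ ↦ 1 - x) (-1) x := by simpa using (hasDerivAt_id x).const_sub 1
    have b1 := (hasDerivAt_ellInt_half hx1 (by linarith)).comp x s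
    have b2 := (hasDerivAt_ellInt_neg_half hx1 (by linarith)).comp x s
    convert! ((a1.mul b2).add (b1.mul a2)).sub (a2.mul b2) using 1
    simp only [Function.comp_apply, sub_sub_cancel]
    field_simp
    ring
  have hconst : ∀ x ∈ Set.Ioo (0 : ℝ) 1, W x = W m := fun x hx ↦
    isOpen_Ioo.is_const_of_deriv_eq_zero isPreconnected_Ioo
      (fun z hz ↦ (hder z hz).differentiableAt.differentiableWithinAt)
      (fun z hz ↦ (hder z hz).deriv) hx ⟨h0, hm⟩
  have hIoo : Set.Ioo (0 : ℝ) 1 ∈ 𝓝[>] (0 : ℝ) := Ioo_mem_nhdsGT one_pos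
  have hlim : Tendsto W (𝓝[>] 0) (𝓝 (W m)) :=
    tendsto_const_nhds.congr' (by filter_upwards [hIoo] with x hx using (hconst x hx).symm)
  have dE := hasDerivAt_ellInt_aux (p := 1 / 2) (by norm_num) le_rfl (zero_lt_one' ℝ)
  have dF := hasDerivAt_ellInt_aux (p := -1 / 2) (by norm_num) le_rfl (zero_lt_one' ℝ)
  have t1 := (dE.sub dF).tendsto_slope_zero_right
  simp only [zero_add, Pi.sub_apply, ellInt_zero, sub_self, sub_zero, smul_eq_mul] at t1
  have t2 : Tendsto (fun x ↦ x * ellInt (-1 / 2) (1 - x)) (𝓝[>] 0) (𝓝 0) := by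
    have h2 : Tendsto (fun x : ℝ ↦ x ^ (1 / 2 : ℝ) * |π / 2 - 0|) (𝓝[>] 0) (𝓝 0) := by
      have : Continuous fun x : ℝ ↦ x ^ (1 / 2 : ℝ) * |π / 2 - 0| :=
        (continuous_id.rpow_const fun _ ↦ .inr (by norm_num)).mul_const _
      simpa using (this.tendsto 0).mono_left nhdsWithin_le_nhds
    refine squeeze_zero_norm' ?_ h2
    filter_upwards [hIoo] with x hx
    rw [norm_mul, Real.norm_of_nonneg hx.1.le]
    calc x * ‖ellInt (-1 / 2) (1 - x)‖ ≤ x * (x ^ (-1 / 2 : ℝ) * |π / 2 - 0|) := by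
          have := hx.1
          gcongr
          exact ellInt_neg_half_le hx.1 hx.2.le
      _ = _ := by
        rw [← mul_assoc, mul_comm x, ← Real.rpow_add_one hx.1.ne']
        norm_num
  have t3 : Tendsto (fun x ↦ ellInt (1 / 2) (1 - x)) (𝓝[>] 0) (𝓝 1) := by
    have h3 := (continuous_ellInt_half.comp (continuous_const.sub continuous_id)).tendsto (0 : ℝ)
      (f := fun x ↦ ellInt (1 / 2) (1 - x))
    rw [sub_zero, ellInt_half_one] at h3
    exact h3.mono_left nhdsWithin_le_nhds
  have t4 : Tendsto (ellInt (-1 / 2)) (𝓝[>] 0) (𝓝 (π / 2)) := by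
    have h4 := dF.continuousAt.tendsto
    rw [ellInt_zero] at h4
    exact h4.mono_left nhdsWithin_le_nhds
  have hlim' := (t1.mul t2).add (t3.mul t4)
  rw [mul_zero, zero_add, one_mul] at hlim'
  refine tendsto_nhds_unique hlim (hlim'.congr' ?_)
  filter_upwards [hIoo] with x hx
  have := hx.1.ne'
  simp only [hW]
  field_simp
  ring

lemma EllK_eq_ellInt {k : ℝ} (h0 : 0 ≤ k) (h1 : k < 1) : EllK k = ellInt (-1 / 2) (k ^ 2) := by
  have hk : k ^ 2 < 1 := by nlinarith
  have himage : Real.sin '' Set.Ioo 0 (π / 2) = Set.Ioo 0 1 := by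
    refine Set.Subset.antisymm ?_ ?_
    · rintro _ ⟨t, ht, rfl⟩
      refine ⟨Real.sin_pos_of_pos_of_lt_pi ht.1 (by linarith [ht.2, Real.pi_pos]), ?_⟩
      rw [← Real.sin_pi_div_two]
      exact Real.sin_lt_sin_of_lt_of_le_pi_div_two (by linarith [ht.1, Real.pi_pos]) le_rfl ht.2
    · have := intermediate_value_Ioo (by positivity : 0 ≤ π / 2) Real.continuous_sin.continuousOn
      rwa [Real.sin_zero, Real.sin_pi_div_two] at this
  rw [EllK, ellInt, intervalIntegral.integral_of_le zero_le_one, integral_Ioc_eq_integral_Ioo,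
    intervalIntegral.integral_of_le (by positivity), integral_Ioc_eq_integral_Ioo, ← himage,
    integral_image_eq_integral_abs_deriv_smul measurableSet_Ioo
      (fun t _ ↦ (Real.hasDerivAt_sin t).hasDerivWithinAt)
      (Real.injOn_sin.mono (Set.Ioo_subset_Icc_self.trans
        (Set.Icc_subset_Icc_left (by linarith [Real.pi_pos]))))]
  refine setIntegral_congr_fun measurableSet_Ioo fun t ht ↦ ?_
  have hc : 0 < Real.cos t :=
    Real.cos_pos_of_mem_Ioo ⟨by linarith [ht.1, Real.pi_pos], ht.2⟩
  have hp := one_sub_mul_sin_sq_pos hk t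
  simp only [smul_eq_mul]
  rw [abs_of_pos hc, ← Real.cos_sq', Real.sqrt_mul (sq_nonneg _), Real.sqrt_sq hc.le,
    show (-1 / 2 : ℝ) = -(1 / 2) by ring, Real.rpow_neg hp.le, ← Real.sqrt_eq_rpow]
  field_simp

lemma EllK_pos {k : ℝ} (h0 : 0 ≤ k) (h1 : k < 1) : 0 < EllK k := by
  have hk : k ^ 2 < 1 := by nlinarith
  rw [EllK_eq_ellInt h0 h1]
  exact intervalIntegral.intervalIntegral_pos_of_pos
    ((continuous_one_sub_mul_sin_sq_rpow _ hk).intervalIntegrable _ _)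
    (fun θ ↦ Real.rpow_pos_of_pos (one_sub_mul_sin_sq_pos hk θ) _) (by positivity)

lemma hasDerivAt_EllK_ratio {k : ℝ} (hk : k ∈ Set.Ioo (0 : ℝ) 1) :
    HasDerivAt (fun k ↦ EllK √(1 - k ^ 2) / EllK k)
      (-(π / (2 * (k * (1 - k ^ 2) * EllK k ^ 2)))) k := by
  have hk0 := hk.1
  have hm0 : 0 < k ^ 2 := pow_pos hk.1 2
  have hm1 : 0 < 1 - k ^ 2 := by nlinarith [hk.1, hk.2]
  have hF : 0 < ellInt (-1 / 2) (k ^ 2) := by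
    rw [← EllK_eq_ellInt hk.1.le hk.2]
    exact EllK_pos hk.1.le hk.2
  have h2 : HasDerivAt (fun k : ℝ ↦ k ^ 2) (2 * k) k := by simpa using hasDerivAt_pow 2 k
  have h3 : HasDerivAt (fun k : ℝ ↦ 1 - k ^ 2) (-(2 * k)) k := h2.const_sub 1
  have d1 := (hasDerivAt_ellInt_neg_half hm1 (by linarith)).comp k h3
  have d2 := HasDerivAt.comp (h := fun k : ℝ ↦ k ^ 2) k
    (hasDerivAt_ellInt_neg_half hm0 (by linarith)) h2
  have hleg := legendre_relation hm0 (by linarith)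
  have heq : (fun k ↦ EllK √(1 - k ^ 2) / EllK k) =ᶠ[𝓝 k]
      fun k ↦ ellInt (-1 / 2) (1 - k ^ 2) / ellInt (-1 / 2) (k ^ 2) := by
    filter_upwards [Ioo_mem_nhds hk.1 hk.2] with x hx
    have hx1 : 0 < 1 - x ^ 2 := by nlinarith [hx.1, hx.2]
    rw [EllK_eq_ellInt hx.1.le hx.2, EllK_eq_ellInt (Real.sqrt_nonneg _), Real.sq_sqrt hx1.le]
    rw [Real.sqrt_lt' one_pos]
    nlinarith [hx.1]
  refine HasDerivAt.congr_of_eventuallyEq ?_ heq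
  convert! d1.div d2 hF.ne' using 1
  rw [EllK_eq_ellInt hk.1.le hk.2]
  simp only [Function.comp_apply, sub_sub_cancel]
  generalize ellInt (-1 / 2) (k ^ 2) = F, ellInt (-1 / 2) (1 - k ^ 2) = F' at hF hleg ⊢
  field_simp
  linear_combination (2 : ℝ) * hleg

/-- Midpoint rule error bound. -/
lemma abs_sub_sub_mul_le_of_hasDerivAt {Ψ φ g : ℝ → ℝ} (hΨ : ∀ x, HasDerivAt Ψ (φ x) x)
    (hg : Monotone g) (hφ : ∀ x y, x ≤ y → |φ y - φ x| ≤ g y - g x) {u c v : ℝ}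
    (huc : u ≤ c) (hcv : c ≤ v) :
    |Ψ v - Ψ u - (v - u) * φ c| ≤ (v - u) * (g v - g u) := by
  have hder : ∀ x ∈ Set.Icc u v,
      HasDerivWithinAt (fun x ↦ Ψ x - x * φ c) (φ x - φ c) (Set.Icc u v) x := fun x _ ↦ by
    convert! ((hΨ x).sub ((hasDerivAt_id x).mul_const (φ c))).hasDerivWithinAt using 1
    rw [one_mul]
  have hbd : ∀ x ∈ Set.Icc u v, ‖φ x - φ c‖ ≤ g v - g u := fun x hx ↦ by
    rw [Real.norm_eq_abs]
    have h1 := hg hx.1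
    have h2 := hg hx.2
    have h3 := hg huc
    have h4 := hg hcv
    rcases le_total c x with h | h
    · linarith [hφ c x h]
    · rw [abs_sub_comm]
      linarith [hφ x c h]
  have h := (convex_Icc u v).norm_image_sub_le_of_norm_hasDerivWithin_le hder hbd
    (Set.left_mem_Icc.mpr (huc.trans hcv)) (Set.right_mem_Icc.mpr (huc.trans hcv))
  rw [Real.norm_eq_abs, Real.norm_eq_abs, abs_of_nonneg (by linarith : 0 ≤ v - u),
    mul_comm (g v - g u)] at h
  convert h using 2
  ring

/-- Midpoint Riemann sums over `[0, ∞)`. -/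
lemma abs_two_mul_tsum_sub_le {Ψ φ g : ℝ → ℝ} (hΨ : ∀ x, HasDerivAt Ψ (φ x) x) (hΨ0 : Ψ 0 = 0)
    (hg : Monotone g) (hφ : ∀ x y, x ≤ y → |φ y - φ x| ≤ g y - g x) {B l δ : ℝ}
    (hB : ∀ x, g x - g 0 ≤ B) (hl : Tendsto Ψ atTop (𝓝 l)) (hδ : 0 < δ)
    (hs : Summable fun n : ℕ ↦ φ ((2 * n + 1) * δ)) :
    |2 * δ * (∑' n : ℕ, φ ((2 * n + 1) * δ)) - l| ≤ 2 * δ * B := by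
  have hN : ∀ N : ℕ, |2 * δ * (∑ n ∈ Finset.range N, φ ((2 * n + 1) * δ)) - Ψ (2 * N * δ)| ≤
      2 * δ * (g (2 * N * δ) - g 0) := by
    intro N
    induction N with
    | zero => simp [hΨ0]
    | succ N ih =>
      have h := abs_sub_sub_mul_le_of_hasDerivAt hΨ hg hφ (u := 2 * N * δ)
        (c := (2 * N + 1) * δ) (v := 2 * (N + 1) * δ) (by nlinarith) (by nlinarith)
      rw [Finset.sum_range_succ]
      push_cast
      rw [abs_le] at *
      constructor <;> nlinarith
  have hΨN : Tendsto (fun N : ℕ ↦ Ψ (2 * N * δ)) atTop (𝓝 l) :=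
    hl.comp (Tendsto.atTop_mul_const hδ (tendsto_natCast_atTop_atTop.const_mul_atTop two_pos))
  exact le_of_tendsto' ((hs.hasSum.tendsto_sum_nat.const_mul _).sub hΨN).abs
    fun N ↦ (hN N).trans (mul_le_mul_of_nonneg_left (hB _) (by positivity))

lemma hasDerivAt_arctan_add_rational (x : ℝ) :
    HasDerivAt (fun x ↦ Real.arctan x + x * (3 * (1 + x ^ 2) ^ 3 + 2 * (1 + x ^ 2) ^ 2 +
      (1 + x ^ 2) + 6) / (3 * (1 + x ^ 2) ^ 4))
      ((5 - 10 * x ^ 2 + x ^ 4) / (1 + x ^ 2) ^ 5) x := by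
  have hu : HasDerivAt (fun x : ℝ ↦ 1 + x ^ 2) (2 * x) x := by
    simpa using (hasDerivAt_pow 2 x).const_add 1
  have hu0 : 1 + x ^ 2 ≠ 0 := by positivity
  have h1 := (((hu.pow 3).const_mul 3).add ((hu.pow 2).const_mul 2)).add hu |>.add_const 6
  convert! (Real.hasDerivAt_arctan x).add (((hasDerivAt_id x).mul h1).div
    ((hu.pow 4).const_mul 3) (by simp only [Pi.pow_apply]; positivity)) using 1
  simp
  field_simp
  ring

lemma abs_sub_le_arctan_sub {x y : ℝ} (hxy : x ≤ y) :
    |(5 - 10 * y ^ 2 + y ^ 4) / (1 + y ^ 2) ^ 5 - (5 - 10 * x ^ 2 + x ^ 4) / (1 + x ^ 2) ^ 5| ≤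
      84 * Real.arctan y - 84 * Real.arctan x := by
  have hder : ∀ x : ℝ, HasDerivAt (fun x ↦ (5 - 10 * x ^ 2 + x ^ 4) / (1 + x ^ 2) ^ 5)
      (x * (-70 + 84 * x ^ 2 - 6 * x ^ 4) / (1 + x ^ 2) ^ 6) x := by
    intro x
    have hu : HasDerivAt (fun x : ℝ ↦ 1 + x ^ 2) (2 * x) x := by
      simpa using (hasDerivAt_pow 2 x).const_add 1
    have hn : HasDerivAt (fun x : ℝ ↦ 5 - 10 * x ^ 2 + x ^ 4) (-(10 * (2 * x)) + 4 * x ^ 3) x := by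
      convert! (((hasDerivAt_pow 2 x).const_mul 10).const_sub 5).add (hasDerivAt_pow 4 x) using 1
      simp
    convert! hn.div (hu.pow 5) (by simp only [Pi.pow_apply]; positivity) using 1
    simp
    field_simp
    ring
  have hbd : ∀ x : ℝ, |x * (-70 + 84 * x ^ 2 - 6 * x ^ 4) / (1 + x ^ 2) ^ 6| ≤
      84 * (1 / (1 + x ^ 2)) := by
    intro x
    have h1 : |x| ≤ 1 + x ^ 2 := by
      rw [abs_le]; constructor <;> nlinarith
    have h2 : |-70 + 84 * x ^ 2 - 6 * x ^ 4| ≤ 84 * (1 + x ^ 2) ^ 2 := by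
      rw [abs_le]; constructor <;> nlinarith [sq_nonneg x, sq_nonneg (x ^ 2)]
    rw [abs_div, abs_mul, abs_of_pos (by positivity : 0 < (1 + x ^ 2) ^ 6)]
    calc |x| * |-70 + 84 * x ^ 2 - 6 * x ^ 4| / (1 + x ^ 2) ^ 6
        ≤ (1 + x ^ 2) * (84 * (1 + x ^ 2) ^ 2) / (1 + x ^ 2) ^ 6 := by gcongr
      _ = 84 * (1 / (1 + x ^ 2)) / (1 + x ^ 2) ^ 2 := by field_simp
      _ ≤ 84 * (1 / (1 + x ^ 2)) := div_le_self (by positivity) (by nlinarith [sq_nonneg x])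
  have hm1 := monotone_of_hasDerivAt_nonneg
    (fun x ↦ ((Real.hasDerivAt_arctan x).const_mul 84).sub (hder x))
    (fun x ↦ sub_nonneg.mpr (abs_le.mp (hbd x)).2) hxy
  have hm2 := monotone_of_hasDerivAt_nonneg
    (fun x ↦ ((Real.hasDerivAt_arctan x).const_mul 84).add (hder x))
    (fun x ↦ by simpa using neg_le_iff_add_nonneg'.mp (abs_le.mp (hbd x)).1) hxy
  simp only [Pi.sub_apply, Pi.add_apply] at hm1 hm2
  rw [abs_le]
  constructor <;> linarith

lemma abs_tsum_odd_sub_pi_div_two_le {δ : ℝ} (hδ : 0 < δ)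
    (hs : Summable fun n : ℕ ↦ (5 - 10 * ((2 * n + 1) * δ) ^ 2 + ((2 * n + 1) * δ) ^ 4) /
      (1 + ((2 * n + 1) * δ) ^ 2) ^ 5) :
    |2 * δ * (∑' n : ℕ, (5 - 10 * ((2 * n + 1) * δ) ^ 2 + ((2 * n + 1) * δ) ^ 4) /
      (1 + ((2 * n + 1) * δ) ^ 2) ^ 5) - π / 2| ≤ 84 * π * δ := by
  have h := abs_two_mul_tsum_sub_le (φ := fun x ↦ (5 - 10 * x ^ 2 + x ^ 4) / (1 + x ^ 2) ^ 5)
    (g := fun x ↦ 84 * Real.arctan x) (l := π / 2) (B := 84 * (π / 2))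
    hasDerivAt_arctan_add_rational (by simp)
    (fun x y h ↦ by simpa using Real.arctan_strictMono.monotone h)
    (fun x y h ↦ abs_sub_le_arctan_sub h)
    (fun x ↦ by simpa using (Real.arctan_lt_pi_div_two x).le) ?_ hδ hs
  · linarith
  rw [← add_zero (π / 2)]
  refine (Real.tendsto_arctan_atTop.mono_right nhdsWithin_le_nhds).add ?_
  refine squeeze_zero_norm' (a := fun x ↦ 4 * x⁻¹) ?_ (by
    simpa using tendsto_inv_atTop_zero.const_mul (4 : ℝ))
  filter_upwards [eventually_gt_atTop 0] with x hx
  rw [Real.norm_of_nonneg (by positivity), div_le_iff₀ (by positivity), ← div_eq_mul_inv]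
  have h1 : 1 ≤ 1 + x ^ 2 := by nlinarith
  have h2 : (1 + x ^ 2) ^ 2 ≤ (1 + x ^ 2) ^ 3 := pow_le_pow_right₀ h1 (by norm_num)
  have h3 : 1 + x ^ 2 ≤ (1 + x ^ 2) ^ 3 := le_self_pow₀ h1 (by norm_num)
  rw [div_mul_eq_mul_div, le_div_iff₀ hx]
  nlinarith [pow_pos (by positivity : 0 < 1 + x ^ 2) 3]

/-- The real part of `(a + i c)⁻⁶`. -/
noncomputable def reInvSix (a c : ℝ) : ℝ :=
  (a ^ 6 - 15 * a ^ 4 * c ^ 2 + 15 * a ^ 2 * c ^ 4 - c ^ 6) / (a ^ 2 + c ^ 2) ^ 6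

lemma reInvSix_neg_left (a c : ℝ) : reInvSix (-a) c = reInvSix a c := by
  rw [reInvSix, reInvSix]
  ring_nf

lemma reInvSix_neg_right (a c : ℝ) : reInvSix a (-c) = reInvSix a c := by
  rw [reInvSix, reInvSix]
  ring_nf

lemma re_inv_pow_six (a c : ℝ) : (((a + c * Complex.I : ℂ) ^ 6)⁻¹).re = reInvSix a c := by
  rw [Complex.inv_re, map_pow, Complex.normSq_add_mul_I, reInvSix]
  congr 1
  simp [pow_succ]
  ring

lemma abs_reInvSix_le {a c : ℝ} (ha : 0 < a) (hc : 0 < c) :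
    |reInvSix a c| ≤ (a ^ 3 * c ^ 3)⁻¹ := by
  have hle : |a ^ 6 - 15 * a ^ 4 * c ^ 2 + 15 * a ^ 2 * c ^ 4 - c ^ 6| ≤ (a ^ 2 + c ^ 2) ^ 3 := by
    rw [abs_le]
    constructor
    · nlinarith [mul_nonneg (sq_nonneg a) (sq_nonneg (a ^ 2 - 3 * c ^ 2))]
    · nlinarith [mul_nonneg (sq_nonneg c) (sq_nonneg (3 * a ^ 2 - c ^ 2))]
  have hac : a * c ≤ a ^ 2 + c ^ 2 := by nlinarith [sq_nonneg (a - c)]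
  rw [reInvSix, abs_div, abs_of_pos (by positivity : 0 < (a ^ 2 + c ^ 2) ^ 6)]
  calc _ ≤ (a ^ 2 + c ^ 2) ^ 3 / (a ^ 2 + c ^ 2) ^ 6 := by gcongr
    _ = ((a ^ 2 + c ^ 2) ^ 3)⁻¹ := by field_simp
    _ ≤ ((a * c) ^ 3)⁻¹ := by gcongr
    _ = _ := by rw [mul_pow]

lemma tsum_int_prod_eq_four_mul {f : ℤ × ℤ → ℝ} (hf : Summable f)
    (h1 : ∀ m n, f (-(m + 1), n) = f (m, n)) (h2 : ∀ m n, f (m, -(n + 1)) = f (m, n)) :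
    ∑' p, f p = 4 * ∑' p : ℕ × ℕ, f (p.1, p.2) := by
  have key : ∀ g : ℤ → ℝ, Summable g → (∀ m, g (-(m + 1)) = g m) →
      ∑' m, g m = 2 * ∑' m : ℕ, g m := fun g hg h ↦ by
    rw [← tsum_nat_add_neg_add_one hg, ← tsum_mul_left]
    simp_rw [h, two_mul]
  have hf' : Summable fun p : ℕ × ℕ ↦ f (p.1, p.2) :=
    hf.comp_injective (Nat.cast_injective.prodMap Nat.cast_injective)
  rw [hf.tsum_prod, key _ hf.prod (fun m ↦ by simp_rw [h1]), hf'.tsum_prod, ← tsum_mul_left,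
    ← tsum_mul_left]
  congr with m
  rw [key _ (hf.prod_factor m) (h2 m)]
  ring

lemma eq_four_mul_tsum_reInvSix {y T : ℝ}
    (h : HasSum (fun p : ℤ × ℤ ↦
      (((2 * p.1 + 1 : ℤ) + (2 * p.2 + 1 : ℤ) * (y * Complex.I) : ℂ) ^ 6)⁻¹) (T : ℂ)) :
    T = 4 * ∑' p : ℕ × ℕ, reInvSix (2 * p.1 + 1) ((2 * p.2 + 1) * y) := by
  have h1 := Complex.hasSum_re h
  have h2 : ∀ p : ℤ × ℤ,
      ((((2 * p.1 + 1 : ℤ) + (2 * p.2 + 1 : ℤ) * (y * Complex.I) : ℂ) ^ 6)⁻¹).re =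
      reInvSix (2 * p.1 + 1) ((2 * p.2 + 1) * y) := fun p ↦ by
    rw [← re_inv_pow_six]
    push_cast
    ring_nf
  simp_rw [h2, Complex.ofReal_re] at h1
  rw [← h1.tsum_eq, tsum_int_prod_eq_four_mul h1.summable]
  · simp
  · intro m n
    dsimp only
    rw [← reInvSix_neg_left]
    congr 1
    push_cast
    ring
  · intro m n
    dsimp only
    rw [← reInvSix_neg_right]
    congr 1
    push_cast
    ring

lemma hasDerivAt_reInvSix_antideriv {a : ℝ} (ha : 0 < a) (b y : ℝ) :
    HasDerivAt (fun y ↦ y * (5 * a ^ 4 - 10 * a ^ 2 * (b * y) ^ 2 + (b * y) ^ 4) /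
      (5 * (a ^ 2 + (b * y) ^ 2) ^ 5)) (reInvSix a (b * y)) y := by
  have hb : HasDerivAt (fun y ↦ b * y) b y := by simpa using (hasDerivAt_id y).const_mul b
  have hu := (hb.pow 2).const_add (a ^ 2)
  have hn := (((hb.pow 2).const_mul (10 * a ^ 2)).const_sub (5 * a ^ 4)).add (hb.pow 4)
  convert! ((hasDerivAt_id y).mul hn).div ((hu.pow 5).const_mul 5)
    (by simp only [Pi.pow_apply]; positivity) using 1
  simp [reInvSix]
  field_simp
  ring

lemma tendsto_reInvSix_antideriv {a b : ℝ} (ha : 0 < a) (hb : 0 < b) :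
    Tendsto (fun y ↦ y * (5 * a ^ 4 - 10 * a ^ 2 * (b * y) ^ 2 + (b * y) ^ 4) /
      (5 * (a ^ 2 + (b * y) ^ 2) ^ 5)) atTop (𝓝 0) := by
  refine squeeze_zero_norm' (a := fun y ↦ (a ^ 4 * b ^ 2)⁻¹ * y⁻¹) ?_ 
    ((tendsto_inv_atTop_zero.const_mul _).trans (by rw [mul_zero]))
  filter_upwards [eventually_gt_atTop 0] with y hy
  have hle : |5 * a ^ 4 - 10 * a ^ 2 * (b * y) ^ 2 + (b * y) ^ 4| ≤
      5 * (a ^ 2 + (b * y) ^ 2) ^ 2 := by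
    rw [abs_le]
    constructor <;> nlinarith [sq_nonneg (a ^ 2), sq_nonneg ((b * y) ^ 2),
      mul_nonneg (sq_nonneg a) (sq_nonneg (b * y))]
  rw [norm_div, norm_mul, Real.norm_of_nonneg hy.le, Real.norm_eq_abs,
    Real.norm_of_nonneg (by positivity : 0 ≤ 5 * (a ^ 2 + (b * y) ^ 2) ^ 5)]
  calc _ ≤ y * (5 * (a ^ 2 + (b * y) ^ 2) ^ 2) / (5 * (a ^ 2 + (b * y) ^ 2) ^ 5) := by gcongr
    _ = y / (a ^ 2 + (b * y) ^ 2) ^ 3 := by field_simp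
    _ ≤ y / ((a ^ 2) ^ 2 * (b * y) ^ 2) := by
      gcongr
      nlinarith [sq_nonneg (a ^ 2), sq_nonneg ((b * y) ^ 2), sq_nonneg a, sq_nonneg (b * y),
        pow_pos ha 6, pow_nonneg (sq_nonneg (b * y)) 3, mul_nonneg (sq_nonneg a) (sq_nonneg ((b * y) ^ 2))]
    _ = _ := by field_simp

lemma integrableOn_const_mul_rpow_neg_three {ε : ℝ} (hε : 0 < ε) (c : ℝ) :
    IntegrableOn (fun y : ℝ ↦ c * y ^ (-3 : ℝ)) (Set.Ioi ε) :=
  (integrableOn_Ioi_rpow_of_lt (by norm_num) hε).const_mul c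

lemma abs_reInvSix_mul_le {a b y : ℝ} (ha : 0 < a) (hb : 0 < b) (hy : 0 < y) :
    ‖reInvSix a (b * y)‖ ≤ (a ^ 3)⁻¹ * (b ^ 3)⁻¹ * y ^ (-3 : ℝ) := by
  refine (abs_reInvSix_le ha (mul_pos hb hy)).trans_eq ?_
  rw [Real.rpow_neg hy.le, show (3 : ℝ) = (3 : ℕ) by norm_num, Real.rpow_natCast]
  field_simp

lemma integrableOn_reInvSix {a b ε : ℝ} (ha : 0 < a) (hb : 0 < b) (hε : 0 < ε) :
    IntegrableOn (fun y ↦ reInvSix a (b * y)) (Set.Ioi ε) := by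
  refine (integrableOn_const_mul_rpow_neg_three hε ((a ^ 3)⁻¹ * (b ^ 3)⁻¹)).mono' ?_ ?_
  · exact Measurable.aestronglyMeasurable (by unfold reInvSix; fun_prop)
  · exact (ae_restrict_iff' measurableSet_Ioi).mpr
      (.of_forall fun y hy ↦ abs_reInvSix_mul_le ha hb (hε.trans hy))

lemma integral_Ioi_reInvSix {a b ε : ℝ} (ha : 0 < a) (hb : 0 < b) (hε : 0 < ε) :
    ∫ y in Set.Ioi ε, reInvSix a (b * y) =
      -(ε * (5 * a ^ 4 - 10 * a ^ 2 * (b * ε) ^ 2 + (b * ε) ^ 4) /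
        (5 * (a ^ 2 + (b * ε) ^ 2) ^ 5)) := by
  rw [integral_Ioi_of_hasDerivAt_of_tendsto' (fun y _ ↦ hasDerivAt_reInvSix_antideriv ha b y)
    (integrableOn_reInvSix ha hb hε) (tendsto_reInvSix_antideriv ha hb), zero_sub]

lemma summable_inv_odd_pow {k : ℕ} (hk : 1 < k) : Summable fun n : ℕ ↦ ((2 * n + 1 : ℝ) ^ k)⁻¹ := by
  have h := (Real.summable_nat_pow_inv.mpr hk).comp_injective
    (i := fun n : ℕ ↦ 2 * n + 1) (fun a b h ↦ by simpa using h)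
  refine h.congr fun n ↦ ?_
  simp

lemma hasSum_integral_Ioi_reInvSix {ε : ℝ} (hε : 0 < ε) :
    HasSum (fun p : ℕ × ℕ ↦ ∫ y in Set.Ioi ε, reInvSix (2 * p.1 + 1) ((2 * p.2 + 1) * y))
      (∫ y in Set.Ioi ε, ∑' p : ℕ × ℕ, reInvSix (2 * p.1 + 1) ((2 * p.2 + 1) * y)) := by
  refine hasSum_integral_of_summable_integral_norm
    (fun p ↦ integrableOn_reInvSix (by positivity) (by positivity) hε) ?_
  refine Summable.of_nonneg_of_le (fun p ↦ integral_nonneg fun _ ↦ norm_nonneg _)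
    (fun p ↦ setIntegral_mono_on
      (integrableOn_reInvSix (by positivity) (by positivity) hε).norm
      (integrableOn_const_mul_rpow_neg_three hε
        (((2 * p.1 + 1 : ℝ) ^ 3)⁻¹ * ((2 * p.2 + 1 : ℝ) ^ 3)⁻¹)) measurableSet_Ioi
      fun y hy ↦ abs_reInvSix_mul_le (by positivity) (by positivity) (hε.trans hy)) ?_
  simp_rw [integral_const_mul]
  exact ((summable_inv_odd_pow (by norm_num)).mul_of_nonneg (summable_inv_odd_pow (by norm_num))
    (fun _ ↦ by positivity) (fun _ ↦ by positivity)).mul_right _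

lemma abs_integral_tsum_reInvSix_add_le {ε : ℝ} (hε : 0 < ε) :
    |(∫ y in Set.Ioi ε, ∑' p : ℕ × ℕ, reInvSix (2 * p.1 + 1) ((2 * p.2 + 1) * y)) +
      π / 20 * ∑' m : ℕ, ((2 * m + 1 : ℝ) ^ 5)⁻¹| ≤
      (42 / 5 * π * ∑' m : ℕ, ((2 * m + 1 : ℝ) ^ 5)⁻¹) * ε := by
  have h := hasSum_integral_Ioi_reInvSix hε
  have hs5 := summable_inv_odd_pow (k := 5) (by norm_num)
  set R : ℝ → ℝ := fun δ ↦ ∑' n : ℕ,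
    (5 - 10 * ((2 * n + 1) * δ) ^ 2 + ((2 * n + 1) * δ) ^ 4) / (1 + ((2 * n + 1) * δ) ^ 2) ^ 5
  have hterm : ∀ m n : ℕ, ∫ y in Set.Ioi ε, reInvSix (2 * m + 1) ((2 * n + 1) * y) =
      -(1 / 10) * ((2 * m + 1 : ℝ) ^ 5)⁻¹ * (2 * (ε / (2 * m + 1))) *
        ((5 - 10 * ((2 * n + 1) * (ε / (2 * m + 1))) ^ 2 + ((2 * n + 1) * (ε / (2 * m + 1))) ^ 4) /
          (1 + ((2 * n + 1) * (ε / (2 * m + 1))) ^ 2) ^ 5) := by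
    intro m n
    rw [integral_Ioi_reInvSix (by positivity) (by positivity) hε]
    have : (2 * m + 1 : ℝ) ≠ 0 := by positivity
    field_simp
    ring
  have hR : ∀ m : ℕ, |2 * (ε / (2 * m + 1)) * R (ε / (2 * m + 1)) - π / 2| ≤ 84 * π * ε := by
    intro m
    have hδ : 0 < ε / (2 * m + 1 : ℝ) := by positivity
    have hsm := h.summable.prod_factor m
    simp_rw [hterm] at hsm
    refine (abs_tsum_odd_sub_pi_div_two_le hδ
      ((summable_mul_left_iff (by positivity)).mp hsm)).trans ?_
    have : ε / (2 * m + 1 : ℝ) ≤ ε := div_le_self hε.le (by simp)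
    gcongr
  have hsum : HasSum (fun m : ℕ ↦ -(1 / 10) * ((2 * m + 1 : ℝ) ^ 5)⁻¹ *
      (2 * (ε / (2 * m + 1)) * R (ε / (2 * m + 1)))) (∫ y in Set.Ioi ε,
        ∑' p : ℕ × ℕ, reInvSix (2 * p.1 + 1) ((2 * p.2 + 1) * y)) := by
    convert! h.prod_fiberwise fun m ↦ (h.summable.prod_factor m).hasSum using 1
    ext m
    simp_rw [hterm]
    rw [tsum_mul_left]
    ring
  have hdiff := hsum.add (hs5.hasSum.mul_left (π / 20))
  have hbd := (hs5.hasSum.mul_left (42 / 5 * π)).mul_right ε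
  rw [← hdiff.tsum_eq, ← hbd.tsum_eq, ← Real.norm_eq_abs]
  refine tsum_of_norm_bounded hbd.summable.hasSum fun m ↦ ?_
  have h1 := hR m
  have h2 : (0 : ℝ) < ((2 * m + 1 : ℝ) ^ 5)⁻¹ := by positivity
  rw [show -(1 / 10) * ((2 * m + 1 : ℝ) ^ 5)⁻¹ *
      (2 * (ε / (2 * m + 1)) * R (ε / (2 * m + 1))) + π / 20 * ((2 * m + 1 : ℝ) ^ 5)⁻¹ =
      -(1 / 10 * ((2 * m + 1 : ℝ) ^ 5)⁻¹) *
        (2 * (ε / (2 * m + 1)) * R (ε / (2 * m + 1)) - π / 2) by ring,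
    norm_mul, norm_neg, Real.norm_of_nonneg (by positivity), Real.norm_eq_abs]
  calc _ ≤ 1 / 10 * ((2 * m + 1 : ℝ) ^ 5)⁻¹ * (84 * π * ε) := by gcongr
    _ = _ := by ring

lemma tsum_odd_inv_pow_five :
    ((∑' m : ℕ, ((2 * m + 1 : ℝ) ^ 5)⁻¹ : ℝ) : ℂ) = 31 / 32 * riemannZeta 5 := by
  have hz := zeta_nat_eq_tsum_of_gt_one (k := 5) (by norm_num)
  have hs := Real.summable_nat_pow_inv (p := 5) |>.mpr (by norm_num)
  have he : Summable fun n : ℕ ↦ (((2 * n : ℕ) : ℝ) ^ 5)⁻¹ :=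
    hs.comp_injective (i := fun n : ℕ ↦ 2 * n) fun a b h ↦ by simpa using h
  have ho : Summable fun n : ℕ ↦ (((2 * n + 1 : ℕ) : ℝ) ^ 5)⁻¹ :=
    hs.comp_injective (i := fun n : ℕ ↦ 2 * n + 1) fun a b h ↦ by simpa using h
  have h := tsum_even_add_odd (f := fun n : ℕ ↦ ((n : ℝ) ^ 5)⁻¹) he ho
  have h32 : ∑' n : ℕ, (((2 * n : ℕ) : ℝ) ^ 5)⁻¹ = 1 / 32 * ∑' n : ℕ, ((n : ℝ) ^ 5)⁻¹ := by
    rw [← tsum_mul_left]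
    congr with n
    push_cast
    rw [mul_pow, mul_inv]
    norm_num
  rw [h32] at h
  have hz' : riemannZeta 5 = ((∑' n : ℕ, ((n : ℝ) ^ 5)⁻¹ : ℝ) : ℂ) := by
    rw [Complex.ofReal_tsum]
    simpa using hz
  rw [hz', show ∑' m : ℕ, ((2 * m + 1 : ℝ) ^ 5)⁻¹ = 31 / 32 * ∑' n : ℕ, ((n : ℝ) ^ 5)⁻¹ by
    push_cast at h ⊢
    linarith]
  push_cast
  ring

lemma tendsto_integral_Ioi_tsum_reInvSix :
    Tendsto (fun ε : ℝ ↦ ∫ y in Set.Ioi ε,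
      ∑' p : ℕ × ℕ, reInvSix (2 * p.1 + 1) ((2 * p.2 + 1) * y)) (𝓝[>] 0)
      (𝓝 (-(π / 20 * ∑' m : ℕ, ((2 * m + 1 : ℝ) ^ 5)⁻¹))) := by
  rw [tendsto_iff_norm_sub_tendsto_zero]
  refine squeeze_zero' (.of_forall fun _ ↦ norm_nonneg _)
    (g := fun ε ↦ (42 / 5 * π * ∑' m : ℕ, ((2 * m + 1 : ℝ) ^ 5)⁻¹) * ε) ?_ ?_
  · filter_upwards [self_mem_nhdsWithin] with ε hε
    rw [sub_neg_eq_add, Real.norm_eq_abs]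
    exact abs_integral_tsum_reInvSix_add_le hε
  · refine Tendsto.mono_left ?_ nhdsWithin_le_nhds
    exact (continuous_const_mul _).tendsto' _ _ (mul_zero _)

lemma continuousOn_EllK : ContinuousOn EllK (Set.Ioo 0 1) := by
  have h : ContinuousOn (fun k : ℝ ↦ ellInt (-1 / 2) (k ^ 2)) (Set.Ioo 0 1) := fun k hk ↦
    (ContinuousAt.comp (f := fun k : ℝ ↦ k ^ 2)
      (hasDerivAt_ellInt_neg_half (pow_pos hk.1 2) (by nlinarith [hk.1, hk.2])).continuousAt
      (continuous_pow 2).continuousAt).continuousWithinAt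
  exact h.congr fun k hk ↦ EllK_eq_ellInt hk.1.le hk.2

lemma EllK_le {k : ℝ} (hk : k ∈ Set.Ioo (0 : ℝ) 1) :
    EllK k ≤ (∫ x in (0 : ℝ)..1, (1 - x) ^ (-7 / 8 : ℝ)) * (1 - k) ^ (-1 / 8 : ℝ) := by
  have hk1 : 0 < 1 - k := by linarith [hk.2]
  have hint : IntervalIntegrable (fun x : ℝ ↦ (1 - x) ^ (-7 / 8 : ℝ)) volume 0 1 := by
    simpa using ((intervalIntegral.intervalIntegrable_rpow' (r := -7 / 8) (by norm_num)
      (a := 0) (b := 1)).comp_sub_left 1).symm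
  rw [← intervalIntegral.integral_mul_const, EllK]
  refine (Real.le_norm_self _).trans (intervalIntegral.norm_integral_le_of_norm_le zero_le_one
    (.of_forall fun x hx ↦ ?_) (hint.mul_const _))
  rw [Real.norm_of_nonneg (by positivity)]
  rcases hx.2.eq_or_lt with rfl | hx1
  · simp
  have hx1' : 0 < 1 - x := by linarith
  have hx0 := hx.1
  have h1 : (1 - x) ^ (3 / 4 : ℝ) * (1 - k) ^ (1 / 4 : ℝ) ≤ 1 - k ^ 2 * x ^ 2 := by
    have hkx : k * x ≤ 1 := by nlinarith [hk.1, hk.2]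
    have hb : 0 < 1 - k * x := by nlinarith [hk.1, hk.2]
    calc _ ≤ (1 - k * x) ^ (3 / 4 : ℝ) * (1 - k * x) ^ (1 / 4 : ℝ) := by
          gcongr <;> nlinarith [hk.1, hk.2]
      _ = 1 - k * x := by rw [← Real.rpow_add hb]; norm_num
      _ ≤ _ := by nlinarith [mul_pos hk.1 hx0]
  have h2 : (1 - x) ^ (7 / 8 : ℝ) * (1 - k) ^ (1 / 8 : ℝ) ≤
      √((1 - x ^ 2) * (1 - k ^ 2 * x ^ 2)) := by
    refine Real.le_sqrt_of_sq_le ?_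
    calc _ = (1 - x) * ((1 - x) ^ (3 / 4 : ℝ) * (1 - k) ^ (1 / 4 : ℝ)) := by
          rw [mul_pow, ← Real.rpow_natCast, ← Real.rpow_natCast, ← Real.rpow_mul hx1'.le,
            ← Real.rpow_mul hk1.le, ← mul_assoc, mul_comm (1 - x) ((1 - x) ^ _),
            ← Real.rpow_add_one hx1'.ne']
          norm_num
      _ ≤ _ := by
        have hx2 : x ^ 2 ≤ x := by nlinarith
        exact mul_le_mul (by linarith) h1 (by positivity) (by linarith)
  rw [show (-7 / 8 : ℝ) = -(7 / 8) by ring, show (-1 / 8 : ℝ) = -(1 / 8) by ring,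
    Real.rpow_neg hx1'.le, Real.rpow_neg hk1.le, ← mul_inv, one_div]
  gcongr

lemma integrableOn_EllK_pow_four :
    IntegrableOn (fun k ↦ k * (2 * k ^ 2 - 1) * EllK k ^ 4) (Set.Ioo 0 1) := by
  set C := ∫ x in (0 : ℝ)..1, (1 - x) ^ (-7 / 8 : ℝ)
  have hint : IntegrableOn (fun x : ℝ ↦ C ^ 4 * (1 - x) ^ (-1 / 2 : ℝ)) (Set.Ioo 0 1) := by
    have h := ((intervalIntegral.intervalIntegrable_rpow' (r := -1 / 2) (by norm_num)
      (a := 0) (b := 1)).comp_sub_left 1).symm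
    simp only [sub_self, sub_zero] at h
    rw [intervalIntegrable_iff_integrableOn_Ioo_of_le zero_le_one] at h
    exact h.const_mul _
  refine hint.mono' (ContinuousOn.aestronglyMeasurable
    ((by fun_prop : Continuous fun k : ℝ ↦ k * (2 * k ^ 2 - 1)).continuousOn.mul
      (continuousOn_EllK.pow 4)) measurableSet_Ioo)
    ((ae_restrict_iff' measurableSet_Ioo).mpr (.of_forall fun k hk ↦ ?_))
  have hk1 : 0 < 1 - k := by linarith [hk.2]
  have hK := (EllK_pos hk.1.le hk.2).le
  have hle : |k * (2 * k ^ 2 - 1)| ≤ 1 := by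
    rw [abs_mul, abs_of_pos hk.1]
    have : |2 * k ^ 2 - 1| ≤ 1 := by
      rw [abs_le]; constructor <;> nlinarith [hk.1, hk.2]
    nlinarith [hk.1, hk.2, abs_nonneg (2 * k ^ 2 - 1)]
  rw [norm_mul, Real.norm_eq_abs, Real.norm_of_nonneg (by positivity)]
  calc _ ≤ 1 * (C * (1 - k) ^ (-1 / 8 : ℝ)) ^ 4 := by
        gcongr
        exact EllK_le hk
    _ = _ := by
      rw [one_mul, mul_pow, ← Real.rpow_natCast ((1 - k) ^ _), ← Real.rpow_mul hk1.le]
      norm_num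

lemma strictAntiOn_EllK_ratio :
    StrictAntiOn (fun k ↦ EllK √(1 - k ^ 2) / EllK k) (Set.Ioo 0 1) := by
  refine strictAntiOn_of_deriv_neg (convex_Ioo 0 1)
    (fun k hk ↦ (hasDerivAt_EllK_ratio hk).continuousAt.continuousWithinAt) fun k hk ↦ ?_
  rw [interior_Ioo] at hk
  have := EllK_pos hk.1.le hk.2
  have := hk.1
  have : 0 < 1 - k ^ 2 := by nlinarith [hk.1, hk.2]
  rw [(hasDerivAt_EllK_ratio hk).deriv, neg_lt_zero]
  positivity

lemma image_EllK_ratio :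
    (fun k ↦ EllK √(1 - k ^ 2) / EllK k) '' Set.Ioo 0 1 = Set.Ioi 0 := by
  refine Set.Subset.antisymm ?_ fun y hy ↦ ?_
  · rintro _ ⟨k, hk, rfl⟩
    refine div_pos (EllK_pos (Real.sqrt_nonneg _) ?_) (EllK_pos hk.1.le hk.2)
    rw [Real.sqrt_lt' one_pos]
    nlinarith [hk.1]
  · obtain ⟨k, hk, h, -⟩ := exists_modulus_of_pos hy
    exact ⟨k, hk, (div_eq_iff (EllK_pos hk.1.le hk.2).ne').mpr h⟩

lemma tsum_reInvSix_EllK_ratio {k : ℝ} (hk : k ∈ Set.Ioo (0 : ℝ) 1) :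
    -(1 / 15) * (EllK k ^ 6 * (k ^ 2 * (1 - k ^ 2) * (2 * k ^ 2 - 1))) =
      4 * ∑' p : ℕ × ℕ, reInvSix (2 * p.1 + 1)
        ((2 * p.2 + 1) * (EllK √(1 - k ^ 2) / EllK k)) := by
  have hy : EllK √(1 - k ^ 2) / EllK k ∈ Set.Ioi 0 := image_EllK_ratio ▸ Set.mem_image_of_mem _ hk
  obtain ⟨k', hk', h, hsum⟩ := exists_modulus_of_pos (Set.mem_Ioi.mp hy)
  obtain rfl : k' = k := strictAntiOn_EllK_ratio.injOn hk' hk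
    ((div_eq_iff (EllK_pos hk'.1.le hk'.2).ne').mpr h)
  exact eq_four_mul_tsum_reInvSix hsum

theorem stmt_15 :
    ((∫ k in (0:ℝ)..(1:ℝ), k * (2 * k^2 - 1) * (EllK k)^4 : ℝ) : ℂ)
      = 93/16 * riemannZeta 5 := by
  set S : ℝ → ℝ := fun y ↦ ∑' p : ℕ × ℕ, reInvSix (2 * p.1 + 1) ((2 * p.2 + 1) * y) with hS
  set Z := ∑' m : ℕ, ((2 * m + 1 : ℝ) ^ 5)⁻¹ with hZ
  have hder : ∀ k ∈ Set.Ioo (0 : ℝ) 1, HasDerivWithinAt (fun k ↦ EllK √(1 - k ^ 2) / EllK k)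
      (-(π / (2 * (k * (1 - k ^ 2) * EllK k ^ 2)))) (Set.Ioo 0 1) k :=
    fun k hk ↦ (hasDerivAt_EllK_ratio hk).hasDerivWithinAt
  have hcongr : Set.EqOn (fun k ↦ |-(π / (2 * (k * (1 - k ^ 2) * EllK k ^ 2)))| •
      (-(120 / π) * S (EllK √(1 - k ^ 2) / EllK k)))
      (fun k ↦ k * (2 * k ^ 2 - 1) * EllK k ^ 4) (Set.Ioo 0 1) := by
    intro k hk
    have h := tsum_reInvSix_EllK_ratio hk
    have hK := EllK_pos hk.1.le hk.2
    have hk0 := hk.1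
    have hk1 : 0 < 1 - k ^ 2 := by nlinarith [hk.1, hk.2]
    have hS' : S (EllK √(1 - k ^ 2) / EllK k) =
        -(1 / 60) * (EllK k ^ 6 * (k ^ 2 * (1 - k ^ 2) * (2 * k ^ 2 - 1))) := by
      simp only [hS]
      linarith
    simp only [smul_eq_mul]
    rw [abs_neg, abs_of_pos (by positivity), hS']
    field_simp
    norm_num
  have hinj := strictAntiOn_EllK_ratio.injOn
  have hint : IntegrableOn (fun y ↦ -(120 / π) * S y) (Set.Ioi 0) := by
    rw [← image_EllK_ratio, integrableOn_image_iff_integrableOn_abs_deriv_smul measurableSet_Ioo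
      hder hinj]
    exact (integrableOn_congr_fun hcongr measurableSet_Ioo).mpr integrableOn_EllK_pow_four
  have hval : ∫ k in (0:ℝ)..1, k * (2 * k ^ 2 - 1) * EllK k ^ 4 =
      ∫ y in Set.Ioi 0, -(120 / π) * S y := by
    rw [← image_EllK_ratio, integral_image_eq_integral_abs_deriv_smul measurableSet_Ioo hder hinj,
      setIntegral_congr_fun measurableSet_Ioo hcongr,
      intervalIntegral.integral_of_le zero_le_one, integral_Ioc_eq_integral_Ioo]
  have hlim : Tendsto (fun ε : ℝ ↦ ∫ y in Set.Ioi ε, -(120 / π) * S y) (𝓝[>] 0)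
      (𝓝 (∫ y in Set.Ioi 0, -(120 / π) * S y)) := by
    have h := (aecover_Ioi_of_Ioi (μ := volume) (A := (0 : ℝ)) (a := id) (l := 𝓝[>] 0)
      (tendsto_id.mono_right nhdsWithin_le_nhds)).integral_tendsto_of_countably_generated hint
    refine h.congr' ?_
    filter_upwards [self_mem_nhdsWithin] with ε hε
    rw [Measure.restrict_restrict measurableSet_Ioi,
      Set.inter_eq_left.mpr (Set.Ioi_subset_Ioi (le_of_lt hε)), id]
  have hlim' : Tendsto (fun ε : ℝ ↦ ∫ y in Set.Ioi ε, -(120 / π) * S y) (𝓝[>] 0)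
      (𝓝 (-(120 / π) * -(π / 20 * Z))) := by
    simp_rw [integral_const_mul]
    exact tendsto_integral_Ioi_tsum_reInvSix.const_mul _
  rw [hval, tendsto_nhds_unique hlim hlim',
    show -(120 / π) * -(π / 20 * Z) = 6 * Z by field_simp; ring,
    Complex.ofReal_mul, tsum_odd_inv_pow_five]
  push_cast
  ring
end

section
/- ∫₀¹ k(2k²-1) K(k)³ K'(k) dk = π⁵/128. -/
open scoped Real
open MeasureTheory

noncomputable def EllE (k : ℝ) : ℝ :=
  ∫ x in (0:ℝ)..(1:ℝ), Real.sqrt ((1 - k^2 * x^2) / (1 - x^2))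

noncomputable def EllK' (k : ℝ) : ℝ := EllK (Real.sqrt (1 - k^2))

theorem ellK_integrand_le {k x : ℝ} (hk0 : 0 ≤ k) (hk1 : k < 1) (hx : x ∈ Set.Ioo (0 : ℝ) 1) :
    1 / √((1 - x ^ 2) * (1 - k ^ 2 * x ^ 2)) ≤
      (1 - k ^ 2) ^ (-(1 / 16) : ℝ) * (1 - x) ^ (-(15 / 16) : ℝ) := by
  obtain ⟨hx0, hx1⟩ := hx
  have ha : 0 < 1 - x := by linarith
  have hc : 0 < 1 - k ^ 2 := by nlinarith
  have h1 : 1 - x ≤ 1 - x ^ 2 := by nlinarith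
  have hk2 : k ^ 2 < 1 := by linarith
  have hx2 : x ^ 2 < 1 := by nlinarith
  have h2 : 1 - x ≤ 1 - k ^ 2 * x ^ 2 := by nlinarith [sq_nonneg x]
  have h3 : 1 - k ^ 2 ≤ 1 - k ^ 2 * x ^ 2 := by nlinarith [sq_nonneg k]
  have hb : 0 < 1 - k ^ 2 * x ^ 2 := by linarith
  rw [Real.rpow_neg hc.le, Real.rpow_neg ha.le, ← mul_inv, one_div]
  refine inv_anti₀ (by positivity) (Real.le_sqrt_of_sq_le ?_)
  calc ((1 - k ^ 2) ^ (1 / 16 : ℝ) * (1 - x) ^ (15 / 16 : ℝ)) ^ 2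
      = (1 - k ^ 2) ^ (1 / 8 : ℝ) * ((1 - x) ^ (7 / 8 : ℝ) * (1 - x)) := by
        rw [mul_pow, ← Real.rpow_mul_natCast hc.le, ← Real.rpow_mul_natCast ha.le,
          ← Real.rpow_add_one ha.ne']
        norm_num
    _ ≤ (1 - k ^ 2 * x ^ 2) ^ (1 / 8 : ℝ) * ((1 - k ^ 2 * x ^ 2) ^ (7 / 8 : ℝ) * (1 - x ^ 2)) := by
        gcongr
    _ = (1 - x ^ 2) * (1 - k ^ 2 * x ^ 2) := by
        rw [← mul_assoc, ← Real.rpow_add hb]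
        norm_num
        ring

theorem intervalIntegrable_one_sub_rpow :
    IntervalIntegrable (fun x : ℝ => (1 - x) ^ (-(15 / 16) : ℝ)) volume 0 1 := by
  have h := (intervalIntegral.intervalIntegrable_rpow' (a := 0) (b := 1)
    (r := (-(15 / 16) : ℝ)) (by norm_num)).comp_sub_left 1
  simpa using h.symm

theorem integral_one_sub_rpow :
    ∫ x in (0 : ℝ)..1, (1 - x) ^ (-(15 / 16) : ℝ) = 16 := by
  rw [intervalIntegral.integral_comp_sub_left (fun x : ℝ => x ^ (-(15 / 16) : ℝ)),
    integral_rpow (by norm_num)]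
  norm_num

theorem integrableOn_ellK_integrand {k : ℝ} (hk0 : 0 ≤ k) (hk1 : k < 1) :
    IntegrableOn (fun x : ℝ => 1 / √((1 - x ^ 2) * (1 - k ^ 2 * x ^ 2))) (Set.Ioo 0 1) := by
  have h := ((intervalIntegrable_iff_integrableOn_Ioo_of_le zero_le_one).1
    intervalIntegrable_one_sub_rpow).const_mul ((1 - k ^ 2) ^ (-(1 / 16) : ℝ))
  refine h.mono' (Measurable.aestronglyMeasurable (by fun_prop)) ?_
  filter_upwards [ae_restrict_mem measurableSet_Ioo] with x hx
  rw [Real.norm_of_nonneg (by positivity)]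
  exact ellK_integrand_le hk0 hk1 hx

theorem ellK_eq_setIntegral (k : ℝ) :
    EllK k = ∫ x in Set.Ioo (0 : ℝ) 1, 1 / √((1 - x ^ 2) * (1 - k ^ 2 * x ^ 2)) := by
  rw [EllK, intervalIntegral.integral_of_le zero_le_one, integral_Ioc_eq_integral_Ioo]

theorem ellK_nonneg (k : ℝ) : 0 ≤ EllK k := by
  rw [ellK_eq_setIntegral]
  exact integral_nonneg fun x => by positivity

theorem ellK_le {k : ℝ} (hk0 : 0 ≤ k) (hk1 : k < 1) :
    EllK k ≤ 16 * (1 - k ^ 2) ^ (-(1 / 16) : ℝ) := by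
  have h := (intervalIntegrable_iff_integrableOn_Ioo_of_le zero_le_one).1
    intervalIntegrable_one_sub_rpow
  have h16 := integral_one_sub_rpow
  rw [intervalIntegral.integral_of_le zero_le_one, integral_Ioc_eq_integral_Ioo] at h16
  rw [ellK_eq_setIntegral]
  refine le_of_le_of_eq ?_ ((integral_const_mul _ _).trans ((congrArg _ h16).trans (mul_comm _ _)))
  exact setIntegral_mono_on (integrableOn_ellK_integrand hk0 hk1) (h.const_mul _)
    measurableSet_Ioo fun x hx => ellK_integrand_le hk0 hk1 hx

theorem measurable_ellK : Measurable EllK := by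
  have h : EllK = fun k => ∫ x in Set.Ioo (0 : ℝ) 1, 1 / √((1 - x ^ 2) * (1 - k ^ 2 * x ^ 2)) :=
    funext ellK_eq_setIntegral
  rw [h]
  refine (StronglyMeasurable.integral_prod_right
    (f := fun k x : ℝ => 1 / √((1 - x ^ 2) * (1 - k ^ 2 * x ^ 2))) ?_).measurable
  refine Measurable.stronglyMeasurable ?_
  simp only [Function.uncurry_def]
  fun_prop

/-- The substitution `x = sin (θ / 2) / sin (φ / 2)` in the elliptic integral. -/
theorem mehler_dirichlet {φ : ℝ} (hφ : φ ∈ Set.Ioo 0 π) :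
    IntegrableOn (fun θ : ℝ => 1 / √(2 * (Real.cos θ - Real.cos φ))) (Set.Ioo 0 φ) ∧
      ∫ θ in Set.Ioo 0 φ, 1 / √(2 * (Real.cos θ - Real.cos φ)) = EllK (Real.sin (φ / 2)) := by
  obtain ⟨h0, hπ⟩ := hφ
  set k := Real.sin (φ / 2) with hk
  have hk0 : 0 < k := Real.sin_pos_of_pos_of_lt_pi (by linarith) (by linarith)
  have hkc : 0 < Real.cos (φ / 2) := Real.cos_pos_of_mem_Ioo ⟨by linarith, by linarith⟩
  have hk1 : k < 1 := by nlinarith [Real.sin_sq_add_cos_sq (φ / 2)]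
  have hderiv : ∀ θ ∈ Set.Ioo 0 φ, HasDerivWithinAt (fun θ : ℝ => Real.sin (θ / 2) / k)
      (Real.cos (θ / 2) / (2 * k)) (Set.Ioo 0 φ) θ := by
    intro θ _
    have h : HasDerivWithinAt (fun θ : ℝ => Real.sin (θ / 2) / k)
        (Real.cos (θ / 2) * (1 / 2) / k) (Set.Ioo 0 φ) θ :=
      (((hasDerivAt_id θ).div_const 2).sin.div_const k).hasDerivWithinAt
    exact h.congr_deriv (by field_simp)
  have hmono : StrictMonoOn (fun θ : ℝ => Real.sin (θ / 2) / k) (Set.Icc 0 φ) := by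
    intro a ha b hb hab
    have := Real.strictMonoOn_sin (a := a / 2) (b := b / 2) ⟨by linarith [ha.1], by linarith [ha.2]⟩
      ⟨by linarith [hb.1], by linarith [hb.2]⟩ (by linarith)
    exact div_lt_div_of_pos_right this hk0
  have himg : (fun θ : ℝ => Real.sin (θ / 2) / k) '' Set.Ioo 0 φ = Set.Ioo 0 1 := by
    have hcont : ContinuousOn (fun θ : ℝ => Real.sin (θ / 2) / k) (Set.Icc 0 φ) := by fun_prop
    have := hcont.image_Ioo_of_strictMonoOn h0.le hmono
    simpa [← hk, hk0.ne'] using this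
  have hinj : Set.InjOn (fun θ : ℝ => Real.sin (θ / 2) / k) (Set.Ioo 0 φ) :=
    (hmono.mono Set.Ioo_subset_Icc_self).injOn
  have heq : Set.EqOn (fun θ : ℝ => |Real.cos (θ / 2) / (2 * k)| •
      (1 / √((1 - (Real.sin (θ / 2) / k) ^ 2) * (1 - k ^ 2 * (Real.sin (θ / 2) / k) ^ 2))))
      (fun θ : ℝ => 1 / √(2 * (Real.cos θ - Real.cos φ))) (Set.Ioo 0 φ) := by
    intro θ hθ
    have hc : 0 < Real.cos (θ / 2) :=
      Real.cos_pos_of_mem_Ioo ⟨by linarith [hθ.1], by linarith [hθ.2]⟩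
    have e1 : Real.cos θ - Real.cos φ = 2 * (k ^ 2 - Real.sin (θ / 2) ^ 2) := by
      have e2 := Real.cos_sq' (θ / 2)
      have e3 := Real.cos_sq' (φ / 2)
      have e4 := Real.cos_two_mul (θ / 2)
      have e5 := Real.cos_two_mul (φ / 2)
      rw [mul_div_cancel₀ _ two_ne_zero] at e4 e5
      rw [e4, e5, e2, e3, hk]
      ring
    have e6 : (1 - (Real.sin (θ / 2) / k) ^ 2) * (1 - k ^ 2 * (Real.sin (θ / 2) / k) ^ 2) =
        (Real.cos (θ / 2) / (2 * k)) ^ 2 * (2 * (Real.cos θ - Real.cos φ)) := by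
      rw [e1, div_pow, div_pow, Real.cos_sq']
      field_simp
    have hp : 0 < Real.cos (θ / 2) / (2 * k) := by positivity
    simp only [smul_eq_mul]
    rw [e6, Real.sqrt_mul (sq_nonneg _), Real.sqrt_sq hp.le, abs_of_pos hp]
    field_simp
  constructor
  · have h := (integrableOn_image_iff_integrableOn_abs_deriv_smul measurableSet_Ioo hderiv hinj
      (fun x => 1 / √((1 - x ^ 2) * (1 - k ^ 2 * x ^ 2)))).1
      (himg ▸ integrableOn_ellK_integrand hk0.le hk1)
    exact h.congr_fun heq measurableSet_Ioo
  · rw [ellK_eq_setIntegral, ← himg, integral_image_eq_integral_abs_deriv_smul measurableSet_Ioo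
      hderiv hinj]
    exact (setIntegral_congr_fun measurableSet_Ioo heq).symm

theorem mehler_dirichlet_compl {φ : ℝ} (hφ : φ ∈ Set.Ioo 0 π) :
    IntegrableOn (fun θ : ℝ => 1 / √(2 * (Real.cos φ - Real.cos θ))) (Set.Ioo φ π) ∧
      ∫ θ in Set.Ioo φ π, 1 / √(2 * (Real.cos φ - Real.cos θ)) = EllK (Real.cos (φ / 2)) := by
  have hφ' : π - φ ∈ Set.Ioo 0 π := ⟨by linarith [hφ.2], by linarith [hφ.1]⟩
  obtain ⟨h1, h2⟩ := mehler_dirichlet hφ'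
  have e : ∀ θ, Real.cos θ - Real.cos (π - φ) = Real.cos φ - Real.cos (π - θ) := by
    intro θ
    simp only [Real.cos_pi_sub]
    ring
  have es : Real.sin ((π - φ) / 2) = Real.cos (φ / 2) := by
    rw [sub_div, Real.sin_pi_div_two_sub]
  simp only [e, es] at h1 h2
  rw [← intervalIntegrable_iff_integrableOn_Ioo_of_le hφ'.1.le] at h1
  rw [← integral_Ioc_eq_integral_Ioo, ← intervalIntegral.integral_of_le hφ'.1.le,
    intervalIntegral.integral_comp_sub_left
      (fun θ => 1 / √(2 * (Real.cos φ - Real.cos θ))) π, sub_sub_cancel, sub_zero,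
    intervalIntegral.integral_of_le hφ.2.le, integral_Ioc_eq_integral_Ioo] at h2
  refine ⟨?_, h2⟩
  have h3 := (h1.comp_sub_left π).symm
  simp only [sub_sub_cancel, sub_zero] at h3
  rwa [intervalIntegrable_iff_integrableOn_Ioo_of_le hφ.2.le] at h3

/-- The generating function `1 / √(1 - 2 z cos θ + z ^ 2)` of the Legendre polynomials, with the
branch that is holomorphic in the unit disc. -/
noncomputable def legendreKernel (z : ℂ) (θ : ℝ) : ℂ :=
  (1 - z * Complex.exp (θ * Complex.I)) ^ (-(1 / 2) : ℂ) *
    (1 - z * Complex.exp (-(θ * Complex.I))) ^ (-(1 / 2) : ℂ)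

noncomputable def legendreTransform (z : ℂ) : ℂ :=
  ∫ θ in (0 : ℝ)..π, legendreKernel z θ

theorem cpow_neg_half_polar {ρ t : ℝ} (hρ : 0 < ρ) (ht : t ∈ Set.Ioc (-π) π) :
    ((ρ : ℂ) * Complex.exp (t * Complex.I)) ^ (-(1 / 2) : ℂ) =
      ((√ρ)⁻¹ : ℝ) * Complex.exp (-(t / 2 * Complex.I)) := by
  have hs : (√ρ)⁻¹ = Real.exp (-(Real.log ρ / 2)) := by
    rw [Real.exp_neg, Real.sqrt_eq_rpow, Real.rpow_def_of_pos hρ]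
    ring_nf
  have him : ((t : ℂ) * Complex.I).im = t := by simp
  rw [Complex.cpow_def_of_ne_zero (mul_ne_zero (by exact_mod_cast hρ.ne') (Complex.exp_ne_zero _)),
    Complex.log_ofReal_mul hρ (Complex.exp_ne_zero _),
    Complex.log_exp (by rw [him]; exact ht.1) (by rw [him]; exact ht.2), hs, Complex.ofReal_exp,
    ← Complex.exp_add]
  push_cast
  ring_nf

theorem one_sub_exp_polar (x : ℝ) :
    1 - Complex.exp (x * Complex.I) =
      ((2 * Real.sin (x / 2) : ℝ) : ℂ) * Complex.exp (((x - π) / 2 : ℝ) * Complex.I) := by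
  have h1 : Complex.exp (((x - π) / 2 : ℝ) * Complex.I) =
      Complex.exp ((x / 2) * Complex.I) * (-Complex.I) := by
    rw [← Complex.exp_neg_pi_div_two_mul_I, ← Complex.exp_add]
    push_cast
    ring_nf
  have h2 : Complex.exp ((x / 2) * Complex.I) * Complex.exp (-(x / 2) * Complex.I) = 1 := by
    rw [← Complex.exp_add]
    simp
  have h3 : Complex.exp (x * Complex.I) =
      Complex.exp ((x / 2) * Complex.I) * Complex.exp ((x / 2) * Complex.I) := by
    rw [← Complex.exp_add]
    ring_nf
  rw [h1, h3]
  push_cast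
  rw [Complex.sin]
  linear_combination (-h2) + (Complex.exp ((x / 2) * Complex.I) * Complex.exp (-(x / 2) * Complex.I)
    - Complex.exp ((x / 2) * Complex.I) * Complex.exp ((x / 2) * Complex.I)) * Complex.I_sq

theorem one_sub_exp_cpow {x : ℝ} (hx : x ∈ Set.Ioo 0 (2 * π)) :
    (1 - Complex.exp (x * Complex.I)) ^ (-(1 / 2) : ℂ) =
      ((√(2 * Real.sin (x / 2)))⁻¹ : ℝ) * Complex.exp ((π - x) / 4 * Complex.I) := by
  have hs : 0 < Real.sin (x / 2) :=
    Real.sin_pos_of_pos_of_lt_pi (by linarith [hx.1]) (by linarith [hx.2])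
  rw [one_sub_exp_polar, cpow_neg_half_polar (by positivity)
    ⟨by linarith [hx.1, Real.pi_pos], by linarith [hx.2, Real.pi_pos]⟩]
  push_cast
  ring_nf

theorem one_sub_exp_neg_cpow {x : ℝ} (hx : x ∈ Set.Ioo 0 (2 * π)) :
    (1 - Complex.exp (-(x * Complex.I))) ^ (-(1 / 2) : ℂ) =
      ((√(2 * Real.sin (x / 2)))⁻¹ : ℝ) * Complex.exp (-((π - x) / 4 * Complex.I)) := by
  have hs : 0 < Real.sin (x / 2) :=
    Real.sin_pos_of_pos_of_lt_pi (by linarith [hx.1]) (by linarith [hx.2])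
  have h : 1 - Complex.exp (-(x * Complex.I)) =
      ((2 * Real.sin (x / 2) : ℝ) : ℂ) * Complex.exp (((π - x) / 2 : ℝ) * Complex.I) := by
    have := congrArg (starRingEnd ℂ) (one_sub_exp_polar x)
    simp only [map_sub, map_one, map_mul, ← Complex.exp_conj, Complex.conj_ofReal,
      Complex.conj_I] at this
    rw [← mul_neg, this]
    push_cast
    ring_nf
  rw [h, cpow_neg_half_polar (by positivity)
    ⟨by linarith [hx.2, Real.pi_pos], by linarith [hx.1, Real.pi_pos]⟩]
  push_cast
  ring_nf

theorem legendreKernel_exp_of_lt {φ θ : ℝ} (hφ : φ < π) (h0 : 0 < θ) (h : θ < φ) :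
    legendreKernel (Complex.exp (φ * Complex.I)) θ =
      (1 / √(2 * (Real.cos θ - Real.cos φ)) : ℝ) *
        (Complex.exp (-(φ / 2 * Complex.I)) * Complex.I) := by
  have h1 : Complex.exp (φ * Complex.I) * Complex.exp (θ * Complex.I) =
      Complex.exp ((φ + θ : ℝ) * Complex.I) := by
    rw [← Complex.exp_add]; push_cast; ring_nf
  have h2 : Complex.exp (φ * Complex.I) * Complex.exp (-(θ * Complex.I)) =
      Complex.exp ((φ - θ : ℝ) * Complex.I) := by
    rw [← Complex.exp_add]; push_cast; ring_nf
  have h3 : 1 / √(2 * (Real.cos θ - Real.cos φ)) =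
      (√(2 * Real.sin ((φ + θ) / 2)))⁻¹ * (√(2 * Real.sin ((φ - θ) / 2)))⁻¹ := by
    have hs : 0 < Real.sin ((φ + θ) / 2) :=
      Real.sin_pos_of_pos_of_lt_pi (by linarith) (by linarith)
    have e : (φ - θ) / 2 = -((θ - φ) / 2) := by ring
    rw [← mul_inv, ← Real.sqrt_mul (by positivity), Real.cos_sub_cos, one_div, e, Real.sin_neg,
      add_comm θ φ]
    ring_nf
  have h4 : Complex.exp (-(φ / 2 * Complex.I)) * Complex.I =
      Complex.exp ((π - (φ + θ : ℝ)) / 4 * Complex.I) *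
        Complex.exp ((π - (φ - θ : ℝ)) / 4 * Complex.I) := by
    nth_rewrite 2 [← Complex.exp_pi_div_two_mul_I]
    rw [← Complex.exp_add, ← Complex.exp_add]
    push_cast
    ring_nf
  rw [legendreKernel, h1, h2, one_sub_exp_cpow ⟨by linarith, by linarith⟩,
    one_sub_exp_cpow ⟨by linarith, by linarith⟩, h3, h4]
  push_cast
  ring

theorem legendreKernel_exp_of_gt {φ θ : ℝ} (h0 : 0 < φ) (h : φ < θ) (hθ : θ < π) :
    legendreKernel (Complex.exp (φ * Complex.I)) θ =
      (1 / √(2 * (Real.cos φ - Real.cos θ)) : ℝ) * Complex.exp (-(φ / 2 * Complex.I)) := by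
  have h1 : Complex.exp (φ * Complex.I) * Complex.exp (θ * Complex.I) =
      Complex.exp ((φ + θ : ℝ) * Complex.I) := by
    rw [← Complex.exp_add]; push_cast; ring_nf
  have h2 : Complex.exp (φ * Complex.I) * Complex.exp (-(θ * Complex.I)) =
      Complex.exp (-((θ - φ : ℝ) * Complex.I)) := by
    rw [← Complex.exp_add]; push_cast; ring_nf
  have h3 : 1 / √(2 * (Real.cos φ - Real.cos θ)) =
      (√(2 * Real.sin ((φ + θ) / 2)))⁻¹ * (√(2 * Real.sin ((θ - φ) / 2)))⁻¹ := by
    have hs : 0 < Real.sin ((φ + θ) / 2) :=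
      Real.sin_pos_of_pos_of_lt_pi (by linarith) (by linarith)
    have e : (θ - φ) / 2 = -((φ - θ) / 2) := by ring
    rw [← mul_inv, ← Real.sqrt_mul (by positivity), Real.cos_sub_cos, one_div, e, Real.sin_neg]
    ring_nf
  have h4 : Complex.exp (-(φ / 2 * Complex.I)) =
      Complex.exp ((π - (φ + θ : ℝ)) / 4 * Complex.I) *
        Complex.exp (-((π - (θ - φ : ℝ)) / 4 * Complex.I)) := by
    rw [← Complex.exp_add]
    push_cast
    ring_nf
  rw [legendreKernel, h1, h2, one_sub_exp_cpow ⟨by linarith, by linarith⟩,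
    one_sub_exp_neg_cpow ⟨by linarith, by linarith⟩, h3, h4]
  push_cast
  ring

theorem legendreTransform_exp {φ : ℝ} (hφ : φ ∈ Set.Ioo 0 π) :
    IntervalIntegrable (legendreKernel (Complex.exp (φ * Complex.I))) volume 0 π ∧
      legendreTransform (Complex.exp (φ * Complex.I)) =
        Complex.exp (-(φ / 2 * Complex.I)) *
          (EllK (Real.cos (φ / 2)) + EllK (Real.sin (φ / 2)) * Complex.I) ∧
      ∫ θ in (0 : ℝ)..π, ‖legendreKernel (Complex.exp (φ * Complex.I)) θ‖ =
        EllK (Real.cos (φ / 2)) + EllK (Real.sin (φ / 2)) := by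
  obtain ⟨hA, hA'⟩ := mehler_dirichlet hφ
  obtain ⟨hB, hB'⟩ := mehler_dirichlet_compl hφ
  have e1 : Set.EqOn (fun θ : ℝ => ((1 / √(2 * (Real.cos θ - Real.cos φ)) : ℝ) : ℂ) *
      (Complex.exp (-(φ / 2 * Complex.I)) * Complex.I))
      (legendreKernel (Complex.exp (φ * Complex.I))) (Set.Ioo 0 φ) :=
    fun θ hθ => (legendreKernel_exp_of_lt hφ.2 hθ.1 hθ.2).symm
  have e2 : Set.EqOn (fun θ : ℝ => ((1 / √(2 * (Real.cos φ - Real.cos θ)) : ℝ) : ℂ) *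
      Complex.exp (-(φ / 2 * Complex.I)))
      (legendreKernel (Complex.exp (φ * Complex.I))) (Set.Ioo φ π) :=
    fun θ hθ => (legendreKernel_exp_of_gt hφ.1 hθ.1 hθ.2).symm
  have hn : ‖Complex.exp (-(φ / 2 * Complex.I))‖ = 1 := by
    have : -((φ : ℂ) / 2 * Complex.I) = ((-(φ / 2) : ℝ) : ℂ) * Complex.I := by push_cast; ring
    rw [this, Complex.norm_exp_ofReal_mul_I]
  have n1 : Set.EqOn (fun θ : ℝ => ‖legendreKernel (Complex.exp (φ * Complex.I)) θ‖)
      (fun θ : ℝ => 1 / √(2 * (Real.cos θ - Real.cos φ))) (Set.Ioo 0 φ) := by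
    intro θ hθ
    simp only
    rw [← e1 hθ, norm_mul, norm_mul, hn, Complex.norm_I, Complex.norm_real,
      Real.norm_of_nonneg (by positivity), mul_one, mul_one]
  have n2 : Set.EqOn (fun θ : ℝ => ‖legendreKernel (Complex.exp (φ * Complex.I)) θ‖)
      (fun θ : ℝ => 1 / √(2 * (Real.cos φ - Real.cos θ))) (Set.Ioo φ π) := by
    intro θ hθ
    simp only
    rw [← e2 hθ, norm_mul, hn, Complex.norm_real, Real.norm_of_nonneg (by positivity), mul_one]
  have i1 : IntervalIntegrable (legendreKernel (Complex.exp (φ * Complex.I))) volume 0 φ := by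
    rw [intervalIntegrable_iff_integrableOn_Ioo_of_le hφ.1.le]
    exact IntegrableOn.congr_fun (hA.ofReal.mul_const _) e1 measurableSet_Ioo
  have i2 : IntervalIntegrable (legendreKernel (Complex.exp (φ * Complex.I))) volume φ π := by
    rw [intervalIntegrable_iff_integrableOn_Ioo_of_le hφ.2.le]
    exact IntegrableOn.congr_fun (hB.ofReal.mul_const _) e2 measurableSet_Ioo
  refine ⟨i1.trans i2, ?_, ?_⟩
  · rw [legendreTransform, ← intervalIntegral.integral_add_adjacent_intervals i1 i2,
      intervalIntegral.integral_of_le hφ.1.le, intervalIntegral.integral_of_le hφ.2.le,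
      integral_Ioc_eq_integral_Ioo, integral_Ioc_eq_integral_Ioo,
      ← setIntegral_congr_fun measurableSet_Ioo e1, ← setIntegral_congr_fun measurableSet_Ioo e2,
      integral_mul_const, integral_mul_const, integral_complex_ofReal, integral_complex_ofReal,
      hA', hB']
    ring
  · rw [← intervalIntegral.integral_add_adjacent_intervals i1.norm i2.norm,
      intervalIntegral.integral_of_le hφ.1.le, intervalIntegral.integral_of_le hφ.2.le,
      integral_Ioc_eq_integral_Ioo, integral_Ioc_eq_integral_Ioo,
      setIntegral_congr_fun measurableSet_Ioo n1, setIntegral_congr_fun measurableSet_Ioo n2,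
      hA', hB', add_comm]

theorem norm_one_sub_le_two_mul {u : ℂ} (hu : ‖u‖ = 1) {r : ℝ} (h0 : 0 ≤ r) (h1 : r ≤ 1) :
    ‖1 - u‖ ≤ 2 * ‖1 - r * u‖ := by
  have hr : ‖(r : ℂ) * u‖ = r := by
    rw [norm_mul, hu, Complex.norm_real, Real.norm_of_nonneg h0, mul_one]
  have e1 : 1 - r ≤ ‖1 - r * u‖ := by
    have := norm_sub_norm_le (1 : ℂ) (r * u)
    rwa [norm_one, hr] at this
  have e2 : ‖1 - u‖ ≤ ‖1 - r * u‖ + (1 - r) := by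
    calc ‖1 - u‖ = ‖(1 - r * u) - ((1 - r : ℝ) : ℂ) * u‖ := by push_cast; ring_nf
      _ ≤ ‖1 - r * u‖ + ‖((1 - r : ℝ) : ℂ) * u‖ := norm_sub_le _ _
      _ = ‖1 - r * u‖ + (1 - r) := by
        rw [norm_mul, hu, Complex.norm_real, Real.norm_of_nonneg (by linarith), mul_one]
  linarith

theorem norm_cpow_neg_half (w : ℂ) : ‖w ^ (-(1 / 2) : ℂ)‖ = ‖w‖ ^ (-(1 / 2) : ℝ) := by
  have := Complex.norm_cpow_real w (-(1 / 2))
  push_cast at this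
  exact this

theorem norm_one_sub_mul_cpow_le {u : ℂ} (hu : ‖u‖ = 1) (hu1 : u ≠ 1) {r : ℝ} (h0 : 0 ≤ r)
    (h1 : r ≤ 1) :
    ‖(1 - r * u) ^ (-(1 / 2) : ℂ)‖ ≤ 2 ^ (1 / 2 : ℝ) * ‖(1 - u) ^ (-(1 / 2) : ℂ)‖ := by
  have hpos : 0 < ‖1 - u‖ := norm_pos_iff.2 (sub_ne_zero.2 hu1.symm)
  have hle := norm_one_sub_le_two_mul hu h0 h1
  rw [norm_cpow_neg_half, norm_cpow_neg_half]
  calc ‖1 - r * u‖ ^ (-(1 / 2) : ℝ) ≤ (‖1 - u‖ / 2) ^ (-(1 / 2) : ℝ) :=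
        Real.rpow_le_rpow_of_nonpos (by positivity) (by linarith) (by norm_num)
    _ = 2 ^ (1 / 2 : ℝ) * ‖1 - u‖ ^ (-(1 / 2) : ℝ) := by
        rw [Real.div_rpow hpos.le zero_le_two, Real.rpow_neg zero_le_two, div_inv_eq_mul, mul_comm]

theorem exp_mul_I_ne_one {x : ℝ} (hx : x ∈ Set.Ioo (-(2 * π)) (2 * π)) (h0 : x ≠ 0) :
    Complex.exp (x * Complex.I) ≠ 1 := by
  intro h
  have h2 : Real.cos x = 1 := by
    have := congrArg Complex.re h
    simpa [Complex.exp_ofReal_mul_I_re] using this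
  exact h0 ((Real.cos_eq_one_iff_of_lt_of_lt hx.1 hx.2).1 h2)

theorem legendreKernel_ofReal_mul_exp (r φ θ : ℝ) :
    legendreKernel (r * Complex.exp (φ * Complex.I)) θ =
      (1 - r * Complex.exp ((φ + θ : ℝ) * Complex.I)) ^ (-(1 / 2) : ℂ) *
        (1 - r * Complex.exp ((φ - θ : ℝ) * Complex.I)) ^ (-(1 / 2) : ℂ) := by
  rw [legendreKernel, mul_assoc, mul_assoc, ← Complex.exp_add, ← Complex.exp_add]
  push_cast
  ring_nf

theorem norm_legendreKernel_le {φ θ r : ℝ} (hφ : φ ∈ Set.Ioo 0 π) (hθ : θ ∈ Set.Ioo 0 π)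
    (hne : θ ≠ φ) (h0 : 0 ≤ r) (h1 : r ≤ 1) :
    ‖legendreKernel (r * Complex.exp (φ * Complex.I)) θ‖ ≤
      2 * ‖legendreKernel (Complex.exp (φ * Complex.I)) θ‖ := by
  have e := legendreKernel_ofReal_mul_exp 1 φ θ
  simp only [Complex.ofReal_one, one_mul] at e
  have a := norm_one_sub_mul_cpow_le (Complex.norm_exp_ofReal_mul_I (φ + θ))
    (exp_mul_I_ne_one ⟨by linarith [hφ.1, hθ.1, Real.pi_pos], by linarith [hφ.2, hθ.2]⟩
      (by linarith [hφ.1, hθ.1])) h0 h1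
  have b := norm_one_sub_mul_cpow_le (Complex.norm_exp_ofReal_mul_I (φ - θ))
    (exp_mul_I_ne_one ⟨by linarith [hφ.1, hθ.2, Real.pi_pos], by linarith [hφ.2, hθ.1, Real.pi_pos]⟩
   
      (sub_ne_zero.2 hne.symm)) h0 h1
  have h2 : (2 : ℝ) ^ (1 / 2 : ℝ) * 2 ^ (1 / 2 : ℝ) = 2 := by
    rw [← Real.rpow_add two_pos]; norm_num
  rw [legendreKernel_ofReal_mul_exp, e, norm_mul, norm_mul]
  refine (mul_le_mul a b (norm_nonneg _) (by positivity)).trans_eq ?_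
  rw [mul_mul_mul_comm, h2]

theorem one_sub_exp_mem_slitPlane {x : ℝ} (hx : x ∈ Set.Ioo (-(2 * π)) (2 * π)) (h0 : x ≠ 0) :
    1 - Complex.exp (x * Complex.I) ∈ Complex.slitPlane := by
  left
  have h1 : Real.cos x ≠ 1 := fun h => h0 ((Real.cos_eq_one_iff_of_lt_of_lt hx.1 hx.2).1 h)
  have h2 := lt_of_le_of_ne (Real.cos_le_one x) h1
  simpa [Complex.exp_ofReal_mul_I_re] using h2

theorem tendsto_legendreKernel {φ θ : ℝ} (hφ : φ ∈ Set.Ioo 0 π) (hθ : θ ∈ Set.Ioo 0 π)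
    (hne : θ ≠ φ) :
    Filter.Tendsto (fun r : ℝ => legendreKernel (r * Complex.exp (φ * Complex.I)) θ) (nhds 1)
      (nhds (legendreKernel (Complex.exp (φ * Complex.I)) θ)) := by
  have key : ∀ x : ℝ, x ∈ Set.Ioo (-(2 * π)) (2 * π) → x ≠ 0 →
      ContinuousAt (fun r : ℝ => (1 - r * Complex.exp (x * Complex.I)) ^ (-(1 / 2) : ℂ)) 1 := by
    intro x hx h0
    refine ContinuousAt.cpow (by fun_prop) continuousAt_const ?_
    simpa using one_sub_exp_mem_slitPlane hx h0
  have h := (key (φ + θ) ⟨by linarith [hφ.1, hθ.1, Real.pi_pos], by linarith [hφ.2, hθ.2]⟩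
      (by linarith [hφ.1, hθ.1])).mul
    (key (φ - θ) ⟨by linarith [hφ.1, hθ.2, Real.pi_pos], by linarith [hφ.2, hθ.1, Real.pi_pos]⟩
    (sub_ne_zero.2 hne.symm))
  have e : (fun r : ℝ => legendreKernel (r * Complex.exp (φ * Complex.I)) θ) = fun r : ℝ =>
      (1 - r * Complex.exp ((φ + θ : ℝ) * Complex.I)) ^ (-(1 / 2) : ℂ) *
        (1 - r * Complex.exp ((φ - θ : ℝ) * Complex.I)) ^ (-(1 / 2) : ℂ) :=
    funext fun r => legendreKernel_ofReal_mul_exp r φ θ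
  have h' : ContinuousAt (fun r : ℝ => legendreKernel (r * Complex.exp (φ * Complex.I)) θ) 1 := by
    rw [e]
    exact h
  simpa using h'.tendsto

theorem one_sub_mem_slitPlane {w : ℂ} (hw : ‖w‖ < 1) : 1 - w ∈ Complex.slitPlane := by
  left
  have := (Complex.re_le_norm w).trans_lt hw
  simpa using this

theorem norm_exp_neg_mul_I (θ : ℝ) : ‖Complex.exp (-(θ * Complex.I))‖ = 1 := by
  have := Complex.norm_exp_ofReal_mul_I (-θ)
  push_cast at this
  rwa [neg_mul] at this

theorem continuous_legendreKernel {z : ℂ} (hz : ‖z‖ < 1) : Continuous (legendreKernel z) := by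
  unfold legendreKernel
  refine Continuous.mul ?_ ?_
  · refine Continuous.cpow (by fun_prop) continuous_const fun θ => one_sub_mem_slitPlane ?_
    rwa [norm_mul, Complex.norm_exp_ofReal_mul_I, mul_one]
  · refine Continuous.cpow (by fun_prop) continuous_const fun θ => one_sub_mem_slitPlane ?_
    rwa [norm_mul, norm_exp_neg_mul_I, mul_one]

theorem norm_ofReal_mul_exp_lt_one (φ : ℝ) {r : ℝ} (hr : r ∈ Set.Ico (0 : ℝ) 1) :
    ‖(r : ℂ) * Complex.exp (φ * Complex.I)‖ < 1 := by
  rw [norm_mul, Complex.norm_exp_ofReal_mul_I, Complex.norm_real, Real.norm_of_nonneg hr.1, mul_one]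
  exact hr.2

theorem eventually_mem_Ico_nhdsLT_one : ∀ᶠ r : ℝ in nhdsWithin 1 (Set.Iio 1),
    r ∈ Set.Ico (0 : ℝ) 1 := by
  filter_upwards [Ico_mem_nhdsLT (zero_lt_one' ℝ)] with r hr using hr

theorem ae_norm_legendreKernel_le {φ r : ℝ} (hφ : φ ∈ Set.Ioo 0 π) (h0 : 0 ≤ r) (h1 : r ≤ 1) :
    ∀ᵐ θ : ℝ, θ ∈ Set.uIoc 0 π → ‖legendreKernel (r * Complex.exp (φ * Complex.I)) θ‖ ≤
      2 * ‖legendreKernel (Complex.exp (φ * Complex.I)) θ‖ := by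
  filter_upwards [Measure.ae_ne volume φ, Measure.ae_ne volume π] with θ hne hnπ hθ
  rw [Set.uIoc_of_le Real.pi_pos.le] at hθ
  exact norm_legendreKernel_le hφ ⟨hθ.1, lt_of_le_of_ne hθ.2 hnπ⟩ hne h0 h1

theorem tendsto_legendreTransform {φ : ℝ} (hφ : φ ∈ Set.Ioo 0 π) :
    Filter.Tendsto (fun r : ℝ => legendreTransform (r * Complex.exp (φ * Complex.I)))
      (nhdsWithin 1 (Set.Iio 1)) (nhds (legendreTransform (Complex.exp (φ * Complex.I)))) := by
  refine intervalIntegral.tendsto_integral_filter_of_dominated_convergence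
    (fun θ => 2 * ‖legendreKernel (Complex.exp (φ * Complex.I)) θ‖) ?_ ?_
    ((legendreTransform_exp hφ).1.norm.const_mul 2) ?_
  · filter_upwards [eventually_mem_Ico_nhdsLT_one] with r hr
    exact (continuous_legendreKernel (norm_ofReal_mul_exp_lt_one φ hr)).aestronglyMeasurable
  · filter_upwards [eventually_mem_Ico_nhdsLT_one] with r hr
    exact ae_norm_legendreKernel_le hφ hr.1 hr.2.le
  · filter_upwards [Measure.ae_ne volume φ, Measure.ae_ne volume π] with θ hne hnπ hθ
    rw [Set.uIoc_of_le Real.pi_pos.le] at hθ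
    exact (tendsto_legendreKernel hφ ⟨hθ.1, lt_of_le_of_ne hθ.2 hnπ⟩ hne).mono_left
      nhdsWithin_le_nhds

theorem norm_legendreTransform_le {φ r : ℝ} (hφ : φ ∈ Set.Ioo 0 π) (hr : r ∈ Set.Ico (0 : ℝ) 1) :
    ‖legendreTransform (r * Complex.exp (φ * Complex.I))‖ ≤
      2 * (EllK (Real.cos (φ / 2)) + EllK (Real.sin (φ / 2))) := by
  obtain ⟨hi, -, hn⟩ := legendreTransform_exp hφ
  rw [← hn, ← intervalIntegral.integral_const_mul]
  refine intervalIntegral.norm_integral_le_of_norm_le Real.pi_pos.le ?_ (hi.norm.const_mul 2)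
  have := ae_norm_legendreKernel_le hφ hr.1 hr.2.le
  rwa [Set.uIoc_of_le Real.pi_pos.le] at this

theorem hasDerivAt_one_sub_mul_cpow {z u : ℂ} (hu : ‖u‖ = 1) (hz : ‖z‖ < 1) :
    HasDerivAt (fun z => (1 - z * u) ^ (-(1 / 2) : ℂ))
      (1 / 2 * (1 - z * u) ^ (-(3 / 2) : ℂ) * u) z := by
  have h1 : HasDerivAt (fun z : ℂ => 1 - z * u) (-u) z := by
    simpa using ((hasDerivAt_id z).mul_const u).const_sub 1
  have h2 := h1.cpow_const (c := (-(1 / 2) : ℂ))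
    (one_sub_mem_slitPlane (by rwa [norm_mul, hu, mul_one]))
  refine h2.congr_deriv ?_
  norm_num

/-- The derivative of `legendreKernel z θ` in `z`. -/
noncomputable def legendreKernelDeriv (z : ℂ) (θ : ℝ) : ℂ :=
  1 / 2 * (1 - z * Complex.exp (θ * Complex.I)) ^ (-(3 / 2) : ℂ) * Complex.exp (θ * Complex.I) *
      (1 - z * Complex.exp (-(θ * Complex.I))) ^ (-(1 / 2) : ℂ) +
    (1 - z * Complex.exp (θ * Complex.I)) ^ (-(1 / 2) : ℂ) *
      (1 / 2 * (1 - z * Complex.exp (-(θ * Complex.I))) ^ (-(3 / 2) : ℂ) *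
        Complex.exp (-(θ * Complex.I)))

theorem hasDerivAt_legendreKernel {z : ℂ} (hz : ‖z‖ < 1) (θ : ℝ) :
    HasDerivAt (fun z => legendreKernel z θ) (legendreKernelDeriv z θ) z :=
  (hasDerivAt_one_sub_mul_cpow (Complex.norm_exp_ofReal_mul_I θ) hz).mul
    (hasDerivAt_one_sub_mul_cpow (norm_exp_neg_mul_I θ) hz)

theorem continuousOn_legendreKernelDeriv :
    ContinuousOn (fun p : ℂ × ℝ => legendreKernelDeriv p.1 p.2)
      (Metric.ball (0 : ℂ) 1 ×ˢ Set.univ) := by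
  have h1 : ∀ c : ℂ, ContinuousOn
      (fun p : ℂ × ℝ => (1 - p.1 * Complex.exp (p.2 * Complex.I)) ^ c)
      (Metric.ball (0 : ℂ) 1 ×ˢ Set.univ) := fun c =>
    ContinuousOn.cpow (by fun_prop) continuousOn_const fun p hp => one_sub_mem_slitPlane (by
      rw [norm_mul, Complex.norm_exp_ofReal_mul_I, mul_one]
      exact mem_ball_zero_iff.1 hp.1)
  have h2 : ∀ c : ℂ, ContinuousOn
      (fun p : ℂ × ℝ => (1 - p.1 * Complex.exp (-(p.2 * Complex.I))) ^ c)
      (Metric.ball (0 : ℂ) 1 ×ˢ Set.univ) := fun c =>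
    ContinuousOn.cpow (by fun_prop) continuousOn_const fun p hp => one_sub_mem_slitPlane (by
      rw [norm_mul, norm_exp_neg_mul_I, mul_one]
      exact mem_ball_zero_iff.1 hp.1)
  unfold legendreKernelDeriv
  exact (((continuousOn_const.mul (h1 _)).mul (by fun_prop)).mul (h2 _)).add
    ((h1 _).mul ((continuousOn_const.mul (h2 _)).mul (by fun_prop)))

theorem differentiableOn_legendreTransform :
    DifferentiableOn ℂ legendreTransform (Metric.ball 0 1) := by
  intro z hz
  rw [mem_ball_zero_iff] at hz
  obtain ⟨ρ, hzρ, hρ⟩ := exists_between hz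
  have hsub : Metric.closedBall (0 : ℂ) ρ ⊆ Metric.ball 0 1 := Metric.closedBall_subset_ball hρ
  obtain ⟨C, hC⟩ := ((isCompact_closedBall (0 : ℂ) ρ).prod
    (isCompact_Icc (a := (0 : ℝ)) (b := π))).exists_bound_of_continuousOn
    (continuousOn_legendreKernelDeriv.mono (Set.prod_mono hsub (Set.subset_univ _)))
  have hnhds : Metric.closedBall (0 : ℂ) ρ ∈ nhds z :=
    Filter.mem_of_superset (Metric.isOpen_ball.mem_nhds (mem_ball_zero_iff.2 hzρ))
      Metric.ball_subset_closedBall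
  have hcont : Continuous (legendreKernelDeriv z) := by
    rw [← continuousOn_univ]
    exact continuousOn_legendreKernelDeriv.comp (f := fun θ : ℝ => (z, θ)) (by fun_prop)
      fun θ _ => ⟨mem_ball_zero_iff.2 hz, Set.mem_univ _⟩
  refine (intervalIntegral.hasDerivAt_integral_of_dominated_loc_of_deriv_le
    (F := legendreKernel) (F' := legendreKernelDeriv) (bound := fun _ => C) hnhds ?_
    ((continuous_legendreKernel hz).intervalIntegrable _ _) hcont.aestronglyMeasurable ?_
    intervalIntegrable_const ?_).2.differentiableAt.differentiableWithinAt
  · filter_upwards [hnhds] with w hw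
    exact (continuous_legendreKernel (mem_ball_zero_iff.1 (hsub hw))).aestronglyMeasurable
  · filter_upwards with θ hθ w hw
    rw [Set.uIoc_of_le Real.pi_pos.le] at hθ
    exact hC (w, θ) ⟨hw, hθ.1.le, hθ.2⟩
  · filter_upwards with θ hθ w hw
    exact hasDerivAt_legendreKernel (mem_ball_zero_iff.1 (hsub hw)) θ

theorem legendreTransform_zero : legendreTransform 0 = π := by
  simp [legendreTransform, legendreKernel]

theorem legendreTransform_conj {z : ℂ} (hz : ‖z‖ < 1) :
    legendreTransform (starRingEnd ℂ z) = starRingEnd ℂ (legendreTransform z) := by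
  have key : ∀ w : ℂ, ‖w‖ < 1 → (starRingEnd ℂ (1 - w)) ^ (-(1 / 2) : ℂ) =
      starRingEnd ℂ ((1 - w) ^ (-(1 / 2) : ℂ)) := by
    intro w hw
    rw [Complex.conj_cpow _ _ (Complex.slitPlane_arg_ne_pi (one_sub_mem_slitPlane hw))]
    simp [map_ofNat]
  rw [legendreTransform, legendreTransform, intervalIntegral.integral_of_le Real.pi_pos.le,
    intervalIntegral.integral_of_le Real.pi_pos.le, ← integral_conj]
  refine integral_congr_ae (Filter.Eventually.of_forall fun θ => ?_)
  simp only [legendreKernel, map_mul]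
  rw [← key _ (by rwa [norm_mul, Complex.norm_exp_ofReal_mul_I, mul_one]),
    ← key _ (by rwa [norm_mul, norm_exp_neg_mul_I, mul_one])]
  simp only [map_sub, map_one, map_mul, ← Complex.exp_conj, map_neg, Complex.conj_ofReal,
    Complex.conj_I]
  rw [mul_comm]
  simp

theorem integral_re_one_sub_pow_mul_legendreTransform {r : ℝ} (hr : r ∈ Set.Ico (0 : ℝ) 1) :
    ∫ φ in (0 : ℝ)..π, ((1 - (r * Complex.exp (φ * Complex.I)) ^ 4) *
      legendreTransform (r * Complex.exp (φ * Complex.I)) ^ 4).re = π ^ 5 := by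
  set G : ℂ → ℂ := fun z => (1 - z ^ 4) * legendreTransform z ^ 4 with hG
  have hGd : DifferentiableOn ℂ G (Metric.ball 0 1) :=
    DifferentiableOn.mul (by fun_prop) (differentiableOn_legendreTransform.pow 4)
  have hmem : ∀ φ : ℝ, (r : ℂ) * Complex.exp (φ * Complex.I) ∈ Metric.ball (0 : ℂ) 1 :=
    fun φ => mem_ball_zero_iff.2 (norm_ofReal_mul_exp_lt_one φ hr)
  have hcont : Continuous fun φ : ℝ => G (r * Complex.exp (φ * Complex.I)) := by
    rw [← continuousOn_univ]
    exact hGd.continuousOn.comp (by fun_prop) fun φ _ => hmem φ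
  have hmean : ∫ φ in (0 : ℝ)..2 * π, G (r * Complex.exp (φ * Complex.I)) = 2 * π * π ^ 4 := by
    have hdc : DiffContOnCl ℂ G (Metric.ball 0 |r|) := by
      refine DifferentiableOn.diffContOnCl (hGd.mono ?_)
      refine Metric.closure_ball_subset_closedBall.trans (Metric.closedBall_subset_ball ?_)
      rw [abs_of_nonneg hr.1]
      exact hr.2
    have h := hdc.circleAverage
    rw [Real.circleAverage_def] at h
    simp only [circleMap_zero] at h
    have hπ : (2 * π : ℝ) ≠ 0 := by positivity
    rw [inv_smul_eq_iff₀ hπ] at h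
    rw [h, hG]
    simp [legendreTransform_zero]
  have hre : ∫ φ in (0 : ℝ)..2 * π, (G (r * Complex.exp (φ * Complex.I))).re = 2 * π ^ 5 := by
    have h := Complex.reCLM.intervalIntegral_comp_comm
      (hcont.intervalIntegrable (μ := volume) 0 (2 * π))
    rw [hmean] at h
    simp only [Complex.reCLM_apply] at h
    rw [h]
    have e : (2 * π * π ^ 4 : ℂ) = ((2 * π ^ 5 : ℝ) : ℂ) := by push_cast; ring
    rw [e, Complex.ofReal_re]
  have hrefl : ∀ φ : ℝ, (G (r * Complex.exp ((2 * π - φ : ℝ) * Complex.I))).re =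
      (G (r * Complex.exp (φ * Complex.I))).re := by
    intro φ
    have e : (r : ℂ) * Complex.exp ((2 * π - φ : ℝ) * Complex.I) =
        starRingEnd ℂ (r * Complex.exp (φ * Complex.I)) := by
      rw [map_mul, ← Complex.exp_conj, map_mul, Complex.conj_ofReal, Complex.conj_ofReal,
        Complex.conj_I]
      push_cast
      rw [sub_mul, Complex.exp_sub, Complex.exp_two_pi_mul_I, one_div, ← Complex.exp_neg, mul_neg]
    rw [e, hG]
    simp only
    rw [legendreTransform_conj (mem_ball_zero_iff.1 (hmem φ)), ← map_pow, ← map_pow,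
      ← map_one (starRingEnd ℂ), ← map_sub, ← map_mul, Complex.conj_re, map_one]
  have hcr : Continuous fun φ : ℝ => (G (r * Complex.exp (φ * Complex.I))).re :=
    Complex.continuous_re.comp hcont
  have hhalf : ∫ φ in π..2 * π, (G (r * Complex.exp (φ * Complex.I))).re =
      ∫ φ in (0 : ℝ)..π, (G (r * Complex.exp (φ * Complex.I))).re := by
    have h := intervalIntegral.integral_comp_sub_left (a := 0) (b := π)
      (fun φ : ℝ => (G (r * Complex.exp (φ * Complex.I))).re) (2 * π)
    simp only [hrefl] at h
    rw [h, sub_zero]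
    congr 1
    ring
  have hsum := intervalIntegral.integral_add_adjacent_intervals
    (hcr.intervalIntegrable (μ := volume) 0 π) (hcr.intervalIntegrable (μ := volume) π (2 * π))
  rw [hhalf, hre] at hsum
  linarith

theorem re_boundary_value (φ A B : ℝ) :
    ((1 - Complex.exp (φ * Complex.I) ^ 4) *
      (Complex.exp (-(φ / 2 * Complex.I)) * (B + A * Complex.I)) ^ 4).re =
      8 * (Real.sin (2 * φ) * B ^ 3 * A - Real.sin (2 * φ) * B * A ^ 3) := by
  have h1 : (1 - Complex.exp (φ * Complex.I) ^ 4) * Complex.exp (-(φ / 2 * Complex.I)) ^ 4 =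
      ((-(2 * Real.sin (2 * φ)) : ℝ) : ℂ) * Complex.I := by
    have e1 : Complex.exp (-(φ / 2 * Complex.I)) ^ 4 = Complex.exp (-(2 * φ) * Complex.I) := by
      rw [← Complex.exp_nat_mul]
      push_cast
      ring_nf
    have e2 : Complex.exp (φ * Complex.I) ^ 4 * Complex.exp (-(2 * φ) * Complex.I) =
        Complex.exp ((2 * φ) * Complex.I) := by
      rw [← Complex.exp_nat_mul, ← Complex.exp_add]
      push_cast
      ring_nf
    rw [e1, sub_mul, e2]
    push_cast
    rw [Complex.sin]
    linear_combination (Complex.exp (-(2 * φ) * Complex.I) - Complex.exp ((2 * φ) * Complex.I)) *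
      Complex.I_sq
  have h2 : ((B : ℂ) + A * Complex.I) ^ 4 = ((B ^ 4 - 6 * B ^ 2 * A ^ 2 + A ^ 4 : ℝ) : ℂ) +
      ((4 * (B ^ 3 * A - B * A ^ 3) : ℝ) : ℂ) * Complex.I := by
    push_cast
    linear_combination (6 * (B : ℂ) ^ 2 * A ^ 2 + 4 * B * A ^ 3 * Complex.I +
      A ^ 4 * (Complex.I ^ 2 - 1)) * Complex.I_sq
  rw [mul_pow, ← mul_assoc, h1, h2]
  simp only [Complex.mul_re, Complex.mul_im, Complex.add_re, Complex.add_im, Complex.ofReal_re,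
    Complex.ofReal_im, Complex.I_re, Complex.I_im]
  ring

theorem ellK_cos_half_pow_four_le {φ : ℝ} (hφ : φ ∈ Set.Ioo 0 π) :
    EllK (Real.cos (φ / 2)) ^ 4 ≤ 16 ^ 4 * (π ^ (1 / 2 : ℝ) * φ ^ (-(1 / 2) : ℝ)) := by
  obtain ⟨h0, hπ⟩ := hφ
  have hs : 0 < Real.sin (φ / 2) := Real.sin_pos_of_pos_of_lt_pi (by linarith) (by linarith)
  have hc : 0 < Real.cos (φ / 2) := Real.cos_pos_of_mem_Ioo ⟨by linarith, by linarith⟩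
  have hc1 : Real.cos (φ / 2) < 1 := by nlinarith [Real.sin_sq_add_cos_sq (φ / 2)]
  have hj : φ / π ≤ Real.sin (φ / 2) := by
    have := Real.mul_le_sin (x := φ / 2) (by linarith) (by linarith)
    calc φ / π = 2 / π * (φ / 2) := by field_simp
      _ ≤ _ := this
  calc EllK (Real.cos (φ / 2)) ^ 4
      ≤ (16 * (1 - Real.cos (φ / 2) ^ 2) ^ (-(1 / 16) : ℝ)) ^ 4 :=
        pow_le_pow_left₀ (ellK_nonneg _) (ellK_le hc.le hc1) 4
    _ = 16 ^ 4 * Real.sin (φ / 2) ^ (-(1 / 2) : ℝ) := by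
        rw [← Real.sin_sq, mul_pow, ← Real.rpow_mul_natCast (sq_nonneg _), ← Real.rpow_natCast_mul
          hs.le]
        norm_num
    _ ≤ 16 ^ 4 * (φ / π) ^ (-(1 / 2) : ℝ) := by
        refine mul_le_mul_of_nonneg_left ?_ (by norm_num)
        exact Real.rpow_le_rpow_of_nonpos (by positivity) hj (by norm_num)
    _ = 16 ^ 4 * (π ^ (1 / 2 : ℝ) * φ ^ (-(1 / 2) : ℝ)) := by
        rw [Real.div_rpow h0.le Real.pi_pos.le, Real.rpow_neg Real.pi_pos.le, div_inv_eq_mul,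
          mul_comm (φ ^ _)]

theorem intervalIntegrable_ellK_cos_half_pow_four :
    IntervalIntegrable (fun φ : ℝ => EllK (Real.cos (φ / 2)) ^ 4) volume 0 π := by
  have h : IntervalIntegrable (fun φ : ℝ => 16 ^ 4 * (π ^ (1 / 2 : ℝ) * φ ^ (-(1 / 2) : ℝ)))
      volume 0 π :=
    ((intervalIntegral.intervalIntegrable_rpow' (by norm_num)).const_mul _).const_mul _
  rw [intervalIntegrable_iff_integrableOn_Ioo_of_le Real.pi_pos.le] at h ⊢
  have hm : Measurable fun φ : ℝ => EllK (Real.cos (φ / 2)) :=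
    measurable_ellK.comp (by fun_prop)
  refine h.mono' (hm.pow_const 4).aestronglyMeasurable ?_
  filter_upwards [ae_restrict_mem measurableSet_Ioo] with φ hφ
  rw [Real.norm_of_nonneg (pow_nonneg (ellK_nonneg _) 4)]
  exact ellK_cos_half_pow_four_le hφ

theorem intervalIntegrable_ellK_sin_half_pow_four :
    IntervalIntegrable (fun φ : ℝ => EllK (Real.sin (φ / 2)) ^ 4) volume 0 π := by
  have h := (intervalIntegrable_ellK_cos_half_pow_four.comp_sub_left π).symm
  simpa only [sub_div, Real.cos_pi_div_two_sub, sub_self, sub_zero] using h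

theorem intervalIntegrable_sin_mul_ellK :
    IntervalIntegrable (fun φ : ℝ => Real.sin (2 * φ) * EllK (Real.cos (φ / 2)) ^ 3 *
      EllK (Real.sin (φ / 2))) volume 0 π := by
  have hm1 : Measurable fun φ : ℝ => EllK (Real.cos (φ / 2)) :=
    measurable_ellK.comp (by fun_prop)
  have hm2 : Measurable fun φ : ℝ => EllK (Real.sin (φ / 2)) :=
    measurable_ellK.comp (by fun_prop)
  refine (intervalIntegrable_ellK_cos_half_pow_four.add
    intervalIntegrable_ellK_sin_half_pow_four).mono_fun
    (Measurable.aestronglyMeasurable (by fun_prop)) ?_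
  filter_upwards with φ
  have ha := ellK_nonneg (Real.sin (φ / 2))
  have hb := ellK_nonneg (Real.cos (φ / 2))
  set a := EllK (Real.sin (φ / 2))
  set b := EllK (Real.cos (φ / 2))
  rw [Real.norm_eq_abs, Real.norm_of_nonneg (by positivity), mul_assoc, abs_mul,
    abs_of_nonneg (a := b ^ 3 * a) (by positivity)]
  have h1 : b ^ 3 * a ≤ b ^ 4 + a ^ 4 := by
    rcases le_total a b with h | h
    · have : b ^ 3 * a ≤ b ^ 3 * b := by gcongr
      nlinarith [pow_nonneg ha 4]
    · have : b ^ 3 * a ≤ a ^ 3 * a := by gcongr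
      nlinarith [pow_nonneg hb 4]
  calc |Real.sin (2 * φ)| * (b ^ 3 * a) ≤ 1 * (b ^ 3 * a) := by
        gcongr
        exact Real.abs_sin_le_one _
    _ ≤ b ^ 4 + a ^ 4 := by rwa [one_mul]

theorem integral_sin_mul_ellK_sub :
    ∫ φ in (0 : ℝ)..π, 8 * (Real.sin (2 * φ) * EllK (Real.cos (φ / 2)) ^ 3 *
        EllK (Real.sin (φ / 2)) - Real.sin (2 * φ) * EllK (Real.cos (φ / 2)) *
        EllK (Real.sin (φ / 2)) ^ 3) = π ^ 5 := by
  have hlim : Filter.Tendsto (fun r : ℝ => ∫ φ in (0 : ℝ)..π,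
      ((1 - (r * Complex.exp (φ * Complex.I)) ^ 4) *
        legendreTransform (r * Complex.exp (φ * Complex.I)) ^ 4).re)
      (nhdsWithin 1 (Set.Iio 1)) (nhds (∫ φ in (0 : ℝ)..π, 8 * (Real.sin (2 * φ) *
        EllK (Real.cos (φ / 2)) ^ 3 * EllK (Real.sin (φ / 2)) - Real.sin (2 * φ) *
        EllK (Real.cos (φ / 2)) * EllK (Real.sin (φ / 2)) ^ 3))) := by
    refine intervalIntegral.tendsto_integral_filter_of_dominated_convergence
      (fun φ => 256 * (EllK (Real.cos (φ / 2)) ^ 4 + EllK (Real.sin (φ / 2)) ^ 4)) ?_ ?_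
      ((intervalIntegrable_ellK_cos_half_pow_four.add
        intervalIntegrable_ellK_sin_half_pow_four).const_mul _) ?_
    · filter_upwards [eventually_mem_Ico_nhdsLT_one] with r hr
      have hc : Continuous fun φ : ℝ => legendreTransform (r * Complex.exp (φ * Complex.I)) := by
        rw [← continuousOn_univ]
        exact differentiableOn_legendreTransform.continuousOn.comp (by fun_prop)
          fun φ _ => mem_ball_zero_iff.2 (norm_ofReal_mul_exp_lt_one φ hr)
      exact Continuous.aestronglyMeasurable (by fun_prop)
    · filter_upwards [eventually_mem_Ico_nhdsLT_one] with r hr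
      filter_upwards [Measure.ae_ne volume π] with φ hne hφ
      rw [Set.uIoc_of_le Real.pi_pos.le] at hφ
      have hb := norm_legendreTransform_le ⟨hφ.1, lt_of_le_of_ne hφ.2 hne⟩ hr
      have h1 : ‖1 - ((r : ℂ) * Complex.exp (φ * Complex.I)) ^ 4‖ ≤ 2 := by
        refine (norm_sub_le _ _).trans ?_
        have := pow_le_one₀ (n := 4) (norm_nonneg _) (norm_ofReal_mul_exp_lt_one φ hr).le
        rw [norm_one, norm_pow]
        linarith
      rw [Real.norm_eq_abs]
      refine (Complex.abs_re_le_norm _).trans ?_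
      rw [norm_mul, norm_pow]
      calc _ ≤ 2 * (2 * (EllK (Real.cos (φ / 2)) + EllK (Real.sin (φ / 2)))) ^ 4 := by gcongr
        _ = 32 * (EllK (Real.cos (φ / 2)) + EllK (Real.sin (φ / 2))) ^ 4 := by ring
        _ ≤ 32 * (2 ^ (4 - 1) * (EllK (Real.cos (φ / 2)) ^ 4 + EllK (Real.sin (φ / 2)) ^ 4)) := by
          gcongr
          exact add_pow_le (ellK_nonneg _) (ellK_nonneg _) 4
        _ = _ := by norm_num; ring
    · filter_upwards [Measure.ae_ne volume π] with φ hne hφ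
      rw [Set.uIoc_of_le Real.pi_pos.le] at hφ
      have hφ' : φ ∈ Set.Ioo 0 π := ⟨hφ.1, lt_of_le_of_ne hφ.2 hne⟩
      rw [← re_boundary_value, ← (legendreTransform_exp hφ').2.1]
      have h1 : Filter.Tendsto (fun r : ℝ => 1 - ((r : ℂ) * Complex.exp (φ * Complex.I)) ^ 4)
          (nhdsWithin 1 (Set.Iio 1)) (nhds (1 - Complex.exp (φ * Complex.I) ^ 4)) := by
        have hc : Continuous fun r : ℝ => 1 - ((r : ℂ) * Complex.exp (φ * Complex.I)) ^ 4 := by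
          fun_prop
        simpa using (hc.tendsto 1).mono_left nhdsWithin_le_nhds
      exact (Complex.continuous_re.tendsto _).comp (h1.mul ((tendsto_legendreTransform hφ').pow 4))
  refine tendsto_nhds_unique hlim (tendsto_const_nhds.congr' ?_)
  filter_upwards [eventually_mem_Ico_nhdsLT_one] with r hr
  exact (integral_re_one_sub_pow_mul_legendreTransform hr).symm

theorem integral_sin_mul_ellK :
    ∫ φ in (0 : ℝ)..π, Real.sin (2 * φ) * EllK (Real.cos (φ / 2)) ^ 3 * EllK (Real.sin (φ / 2)) =
      π ^ 5 / 16 := by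
  have hrefl : ∀ φ : ℝ, Real.sin (2 * (π - φ)) * EllK (Real.cos ((π - φ) / 2)) ^ 3 *
      EllK (Real.sin ((π - φ) / 2)) =
      -(Real.sin (2 * φ) * EllK (Real.cos (φ / 2)) * EllK (Real.sin (φ / 2)) ^ 3) := by
    intro φ
    rw [mul_sub, Real.sin_two_pi_sub, sub_div, Real.cos_pi_div_two_sub, Real.sin_pi_div_two_sub]
    ring
  have h1 := intervalIntegrable_sin_mul_ellK
  have h2 := (h1.comp_sub_left π).symm
  have h3 := intervalIntegral.integral_comp_sub_left (a := 0) (b := π)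
    (fun φ : ℝ => Real.sin (2 * φ) * EllK (Real.cos (φ / 2)) ^ 3 * EllK (Real.sin (φ / 2))) π
  simp only [hrefl, sub_self, sub_zero] at h2 h3
  have h4 := integral_sin_mul_ellK_sub
  rw [intervalIntegral.integral_const_mul] at h4
  have h5 := intervalIntegral.integral_add h1 h2
  simp only [← sub_eq_add_neg] at h5
  rw [h5, h3] at h4
  linarith

theorem stmt_16 :
    ∫ k in (0:ℝ)..(1:ℝ), k * (2 * k^2 - 1) * (EllK k)^3 * EllK' k = π^5 / 128 := by
  have hanti : StrictAntiOn (fun φ : ℝ => Real.cos (φ / 2)) (Set.Icc 0 π) := by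
    intro a ha b hb hab
    exact Real.strictAntiOn_cos ⟨by linarith [ha.1], by linarith [ha.2, Real.pi_pos]⟩
      ⟨by linarith [hb.1], by linarith [hb.2, Real.pi_pos]⟩ (by linarith)
  have himg : (fun φ : ℝ => Real.cos (φ / 2)) '' Set.Ioo 0 π = Set.Ioo 0 1 := by
    have hcont : ContinuousOn (fun φ : ℝ => Real.cos (φ / 2)) (Set.Icc 0 π) := by fun_prop
    simpa using hcont.image_Ioo_of_strictAntiOn Real.pi_pos.le hanti
  have hderiv : ∀ φ ∈ Set.Ioo 0 π, HasDerivWithinAt (fun φ : ℝ => Real.cos (φ / 2))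
      (-Real.sin (φ / 2) * (1 / 2)) (Set.Ioo 0 π) φ := fun φ _ =>
    ((hasDerivAt_id φ).div_const 2).cos.hasDerivWithinAt
  have heq : Set.EqOn (fun φ : ℝ => |-Real.sin (φ / 2) * (1 / 2)| •
      (Real.cos (φ / 2) * (2 * Real.cos (φ / 2) ^ 2 - 1) * EllK (Real.cos (φ / 2)) ^ 3 *
        EllK' (Real.cos (φ / 2))))
      (fun φ : ℝ => 1 / 8 * (Real.sin (2 * φ) * EllK (Real.cos (φ / 2)) ^ 3 *
        EllK (Real.sin (φ / 2)))) (Set.Ioo 0 π) := by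
    intro φ hφ
    have hs : 0 < Real.sin (φ / 2) :=
      Real.sin_pos_of_pos_of_lt_pi (by linarith [hφ.1]) (by linarith [hφ.1, hφ.2])
    have e1 := Real.sin_two_mul (φ / 2)
    have e2 := Real.cos_two_mul (φ / 2)
    rw [mul_div_cancel₀ _ two_ne_zero] at e1 e2
    simp only [smul_eq_mul]
    rw [EllK', ← Real.sin_sq, Real.sqrt_sq hs.le, neg_mul, abs_neg, abs_of_pos (by positivity),
      Real.sin_two_mul, e1, e2]
    ring
  have h := integral_sin_mul_ellK
  rw [intervalIntegral.integral_of_le Real.pi_pos.le, integral_Ioc_eq_integral_Ioo] at h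
  rw [intervalIntegral.integral_of_le zero_le_one, integral_Ioc_eq_integral_Ioo, ← himg,
    integral_image_eq_integral_abs_deriv_smul measurableSet_Ioo hderiv
      (hanti.mono Set.Ioo_subset_Icc_self).injOn,
    setIntegral_congr_fun measurableSet_Ioo heq, integral_const_mul, h]
  ring
end
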